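/- arXiv:2002.05577 — 2 statements merged into one kernel-verified Lean document; each statement's English description precedes it below -/
import Mathlib

section
/- Let k ≥ 3 be an integer and let A = (a_{i,j}) be a fixed k×k symmetric matrix of strictly positive integers with ∑_{j=1}^k a_{i,j} = d for every i. Then the total variation distance between the law μ^n_A of the regular stochastic block model G^n_A and the uniform probability measure μ^{kn}_d on the set of d-regular simple graphs on kn labeled vertices satisfies lim_{n→∞} ‖μ^n_A − μ^{kn}_d‖_TV = 1. -/
/-!
The two laws are separated by the event `plantable`, that some equipartition of the vertices is
compatible with the graph. The block model satisfies it with probability one as soon as it is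
nondegenerate (`exists_compat`). Under the uniform law on `d`-regular graphs its probability decays
exponentially, by a first-moment bound (`exists_uniform_plantable_sq_le`): the expected number of
compatible equipartitions tends to zero.

Both counts in the first moment go through perfect matchings of the `N = k n d` half-edges, encoded
as fixed-point-free involutions of `V × Fin d`. A `d`-regular simple graph arises from exactly
`d! ^ |V|` matchings.

* Denominator. There are about `√N!` matchings, up to a factor `√N`
  (`factorial_le_card_matchings_sq`), and a fraction at least `N ^ (-O(1))` of them give simple
  graphs (`card_matchings_le_simple`). The latter is a switching argument: Markov's inequality shows
  that half of the matchings have a bounded number of defects, and boundedly many switchings remove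
  these. Since polynomial factors are harmless here, no asymptotic enumeration of regular graphs is
  needed.
* Numerator. For a fixed equipartition, a compatible matching assigns a target cluster to every
  half-edge, so that at each vertex of cluster `i` one reads a word with `a i j` letters `j`, and
  then matches the half-edges of type `(i, j)` with those of type `(j, i)`. The number `T` of such
  matchings therefore satisfies `T² ≤ (∏ W_i ^ n)² ∏ (n a i j)!` with `W_i = d! / ∏ⱼ (a i j)!`
  (`card_typed_matchings_sq_le`).

The square of the ratio is at most a polynomial in `n` times `ρ ^ n`, where
`ρ = k ^ (2 k) ∏ W_i² ∏ (a i j) ^ (a i j) / (k d) ^ (k d)`. The ratio of factorials is estimated by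
comparing consecutive values of `n` (`exists_prod_factorial_le`). Finally `ρ < 1` (`rate_lt_one`):
it suffices that `k² W_i² ∏ⱼ (a i j) ^ (a i j) < (k d) ^ d` for each `i`. The number `W_i` is a
multinomial coefficient, and the terms of the multinomial expansions of `d ^ d = (∑ⱼ a i j) ^ d` and
of `k ^ d = (1 + ⋯ + 1) ^ d` at `a i` and at its `k (k - 1)` neighbours `a i + e_l - e_m` give
`W_i ∏ⱼ (a i j) ^ (a i j) ≤ d ^ d / L` and `W_i ≤ k ^ d / L` with `L = 1 + k (k - 1) / 2`
(`card_typeWords_mode_le`, `card_typeWords_uniform_le`). For `k ≥ 3` one has `k < L`, which is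
enough.
-/

open Filter

/-- `degIn G v S` is the number of neighbours of `v` lying in the set `S`. -/
noncomputable def degIn {V : Type} (G : SimpleGraph V) (v : V) (S : Set V) : ℕ :=
  (S ∩ G.neighborSet v).ncard

/-- `p` partitions the `k * n` labelled vertices into `k` labelled clusters of size `n`. -/
def IsEquiPartition (k n : ℕ) (p : Fin (k * n) → Fin k) : Prop :=
  ∀ i : Fin k, (p ⁻¹' {i}).ncard = n

/-- The graph `G` is compatible with the partition `p`: every vertex of cluster `i` has
exactly `a i j` neighbours in cluster `j`.  These are exactly the graphs obtained by
planting a uniformly random `a i i`-regular graph on each cluster and a uniformly random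
`a i j`-bipartite-regular graph between distinct clusters. -/
def Compat (k n : ℕ) (a : Fin k → Fin k → ℕ) (p : Fin (k * n) → Fin k)
    (G : SimpleGraph (Fin (k * n))) : Prop :=
  ∀ v : Fin (k * n), ∀ j : Fin k, degIn G v (p ⁻¹' {j}) = a (p v) j

/-- Probability, under the RSBM `𝒢ⁿ_A` (uniform partition into `k` labelled size-`n`
clusters, together with independent uniform regular/bipartite-regular plantings — i.e. the
uniform distribution on compatible (partition, graph) pairs), of an event `E` depending on
the partition and the graph. -/
noncomputable def rsbmP (k n : ℕ) (a : Fin k → Fin k → ℕ)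
    (E : (Fin (k * n) → Fin k) → SimpleGraph (Fin (k * n)) → Prop) : ℝ :=
  (({pg : (Fin (k * n) → Fin k) × SimpleGraph (Fin (k * n)) |
      IsEquiPartition k n pg.1 ∧ Compat k n a pg.1 pg.2 ∧ E pg.1 pg.2}).ncard : ℝ) /
    (({pg : (Fin (k * n) → Fin k) × SimpleGraph (Fin (k * n)) |
      IsEquiPartition k n pg.1 ∧ Compat k n a pg.1 pg.2}).ncard : ℝ)

/-- The law `μⁿ_A` of the RSBM graph, evaluated on a set of graphs. -/
noncomputable def rsbmLaw (k n : ℕ) (a : Fin k → Fin k → ℕ)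
    (E : Set (SimpleGraph (Fin (k * n)))) : ℝ :=
  rsbmP k n a fun _ G => G ∈ E

/-- The uniform probability measure `μ^m_d` on the set of `d`-regular simple graphs on `m`
labelled vertices, evaluated on a set of graphs. -/
noncomputable def uniformRegularLaw (m d : ℕ) (E : Set (SimpleGraph (Fin m))) : ℝ :=
  (({G : SimpleGraph (Fin m) | (∀ v, (G.neighborSet v).ncard = d) ∧ G ∈ E}).ncard : ℝ) /
    (({G : SimpleGraph (Fin m) | ∀ v, (G.neighborSet v).ncard = d}).ncard : ℝ)

/-- Total variation distance: the supremum over events of the discrepancy of the measures. -/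
noncomputable def tvDist {Ω : Type} (μ ν : Set Ω → ℝ) : ℝ :=
  ⨆ E : Set Ω, |μ E - ν E|

section
open Finset Equiv

/-! ### Counting perfect matchings -/

/-- The perfect matchings of a finite set of points, encoded as fixed-point-free involutions. -/
def matchings (P : Type) [Fintype P] [DecidableEq P] : Finset (Perm P) :=
  univ.filter fun σ => (∀ x, σ x ≠ x) ∧ ∀ x, σ (σ x) = x

theorem mem_matchings {P : Type} [Fintype P] [DecidableEq P] {σ : Perm P} :
    σ ∈ matchings P ↔ (∀ x, σ x ≠ x) ∧ ∀ x, σ (σ x) = x := by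
  simp [matchings]

theorem matchings_eq_cycleType (P : Type) [Fintype P] [DecidableEq P] (h : ℕ)
    (hP : Fintype.card P = 2 * h) :
    matchings P = univ.filter fun σ : Perm P => σ.cycleType = Multiset.replicate h 2 := by
  ext σ
  simp only [mem_matchings, mem_filter, mem_univ, true_and]
  constructor
  · rintro ⟨h1, h2⟩
    have h3 : σ ^ 2 = 1 := by ext x; simp [pow_two, h2]
    have h4 := Perm.cycleType_of_pow_prime_eq_one h3
    have h5 := Perm.sum_cycleType σ
    have h6 : σ.support = univ := by ext x; simp [h1]
    rw [h4, h6, card_univ, hP] at h5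
    simp only [Multiset.sum_replicate, smul_eq_mul] at h5
    rw [h4]; congr 1; omega
  · intro h1
    have h5 := Perm.sum_cycleType σ
    rw [h1] at h5
    simp only [Multiset.sum_replicate, smul_eq_mul] at h5
    have h6 : σ.support = univ := by
      apply Finset.eq_univ_of_card; omega
    refine ⟨fun x => ?_, fun x => ?_⟩
    · have : x ∈ σ.support := by rw [h6]; simp
      simpa using this
    · have h3 : σ ^ 2 = 1 := by
        rw [Perm.pow_prime_eq_one_iff]
        intro c hc; rw [h1] at hc; exact Multiset.eq_of_mem_replicate hc
      have := congrArg (fun f : Perm P => f x) h3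
      simpa [pow_two] using this

theorem card_matchings_mul (P : Type) [Fintype P] [DecidableEq P] (h : ℕ)
    (hP : Fintype.card P = 2 * h) :
    #(matchings P) * (2 ^ h * h.factorial) = (2 * h).factorial := by
  rw [matchings_eq_cycleType P h hP]
  have := Perm.card_of_cycleType_mul_eq P (Multiset.replicate h 2)
  rw [if_pos] at this
  · rw [hP] at this
    rw [← this]
    congr 1
    rcases Nat.eq_zero_or_pos h with rfl | hh
    · simp
    · have : (Multiset.replicate h 2).toFinset = {2} := by
        rw [Multiset.toFinset_replicate, if_neg (by omega)]
      rw [this]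
      simp [mul_comm h 2]
  · refine ⟨by simp [hP]; omega, fun a ha => (Multiset.eq_of_mem_replicate ha).ge⟩

theorem card_even_of_matching {P : Type} [Fintype P] [DecidableEq P] {σ : Perm P}
    (hσ : σ ∈ matchings P) : Even (Fintype.card P) := by
  rw [mem_matchings] at hσ
  have h3 : σ ^ 2 = 1 := by ext x; simp [pow_two, hσ.2]
  have h4 := Perm.cycleType_of_pow_prime_eq_one h3
  have h5 := Perm.sum_cycleType σ
  have h6 : σ.support = univ := by ext x; simp [hσ.1]
  rw [h4, h6, card_univ] at h5
  simp only [Multiset.sum_replicate, smul_eq_mul] at h5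
  exact ⟨σ.cycleType.card, by omega⟩

/-- Upper bound on the number of matchings; it comes from `centralBinom h ≤ 4 ^ h`. -/
theorem card_matchings_sq_le (P : Type) [Fintype P] [DecidableEq P] :
    #(matchings P) ^ 2 ≤ (Fintype.card P).factorial := by
  rcases (matchings P).eq_empty_or_nonempty with h0 | ⟨σ, hσ⟩
  · simp [h0]
  obtain ⟨h, hh⟩ := card_even_of_matching hσ
  have hP : Fintype.card P = 2 * h := by omega
  have e := card_matchings_mul P h hP
  have hc : (2 * h).factorial ≤ (2 ^ h * h.factorial) ^ 2 := by
    have h1 : Nat.centralBinom h * h.factorial * h.factorial = (2 * h).factorial := by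
      have := Nat.choose_mul_factorial_mul_factorial (show h ≤ 2 * h by omega)
      rwa [show 2 * h - h = h by omega] at this
    have h2 : Nat.centralBinom h ≤ 4 ^ h := by
      rw [show 4 = 2 ^ 2 by norm_num, ← pow_mul]; exact Nat.choose_le_two_pow _ _
    calc _ = Nat.centralBinom h * (h.factorial * h.factorial) := by rw [← h1]; ring
      _ ≤ 4 ^ h * (h.factorial * h.factorial) := Nat.mul_le_mul_right _ h2
      _ = _ := by rw [show 4 = 2 ^ 2 by norm_num, ← pow_mul, mul_comm 2 h, pow_mul]; ring
  have hpos : 0 < 2 ^ h * h.factorial := by positivity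
  rw [hP]
  have h4 : #(matchings P) ≤ 2 ^ h * h.factorial := by
    by_contra hlt
    push Not at hlt
    nlinarith
  calc _ = #(matchings P) * #(matchings P) := by ring
    _ ≤ #(matchings P) * (2 ^ h * h.factorial) := Nat.mul_le_mul_left _ h4
    _ = _ := e

/-- Lower bound on the number of matchings; it comes from `4 ^ h ≤ 2 h * centralBinom h`. -/
theorem factorial_le_card_matchings_sq (P : Type) [Fintype P] [DecidableEq P]
    (he : Even (Fintype.card P)) (hpos : 0 < Fintype.card P) :
    (Fintype.card P).factorial ≤ Fintype.card P * #(matchings P) ^ 2 := by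
  obtain ⟨h, hh⟩ := he
  have hP : Fintype.card P = 2 * h := by omega
  have e := card_matchings_mul P h hP
  have hc : (2 ^ h * h.factorial) ^ 2 ≤ (2 * h) * (2 * h).factorial := by
    have h1 : Nat.centralBinom h * h.factorial * h.factorial = (2 * h).factorial := by
      have := Nat.choose_mul_factorial_mul_factorial (show h ≤ 2 * h by omega)
      rwa [show 2 * h - h = h by omega] at this
    have h2 : 4 ^ h ≤ 2 * h * Nat.centralBinom h :=
      Nat.four_pow_le_two_mul_self_mul_centralBinom h (by omega)
    calc _ = 4 ^ h * (h.factorial * h.factorial) := by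
            rw [show 4 = 2 ^ 2 by norm_num, ← pow_mul, mul_comm 2 h, pow_mul]; ring
      _ ≤ (2 * h * Nat.centralBinom h) * (h.factorial * h.factorial) := Nat.mul_le_mul_right _ h2
      _ = _ := by rw [← h1]; ring
  rw [hP]
  have hf : 0 < (2 * h).factorial := Nat.factorial_pos _
  have : (2 * h).factorial * (2 * h).factorial ≤
      (2 * h).factorial * (2 * h * #(matchings P) ^ 2) := by
    calc (2 * h).factorial * (2 * h).factorial
        = #(matchings P) ^ 2 * (2 ^ h * h.factorial) ^ 2 := by rw [← e]; ring
      _ ≤ #(matchings P) ^ 2 * ((2 * h) * (2 * h).factorial) := Nat.mul_le_mul_left _ hc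
      _ = _ := by ring
  exact Nat.le_of_mul_le_mul_left this hf

/-! ### Most matchings are simple up to a polynomial factor -/

/-- The number of ordered pairs of distinct points at a common vertex whose partners also lie at a
common vertex.  It vanishes exactly when the multigraph induced by `σ` is simple (a loop joining
`x` and `σ x` contributes the pair `(x, σ x)`). -/
def bad {P V : Type} [Fintype P] [DecidableEq P] [DecidableEq V] (vert : P → V) (σ : Perm P) : ℕ :=
  #(univ.filter fun q : P × P => q.1 ≠ q.2 ∧ vert q.1 = vert q.2 ∧ vert (σ q.1) = vert (σ q.2))

theorem conj_mem_matchings {P : Type} [Fintype P] [DecidableEq P] {σ : Perm P} (p q : P)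
    (hσ : σ ∈ matchings P) : swap p q * σ * swap p q ∈ matchings P := by
  rw [mem_matchings] at *
  refine ⟨fun x hx => ?_, fun x => ?_⟩
  · simp only [Perm.mul_apply] at hx
    apply hσ.1 (swap p q x)
    have := congrArg (swap p q) hx
    simpa using this
  · simp [Perm.mul_apply, hσ.2]

/-- If a family of permutations is stable under conjugation by the transpositions of `W`, then each
value in `W` is taken at a point `x ∉ W` by at most the fraction `1 / #W` of the family. -/
theorem card_mul_filter_apply_eq_le {P : Type} [Fintype P] [DecidableEq P] (A : Finset (Perm P))
    (W : Finset P) (x : P) (hx : x ∉ W)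
    (hA : ∀ w ∈ W, ∀ w' ∈ W, ∀ σ ∈ A, swap w w' * σ * swap w w' ∈ A) (w : P) (hw : w ∈ W) :
    #W * #(A.filter fun σ => σ x = w) ≤ #A := by
  have h1 : ∀ w' ∈ W, #(A.filter fun σ => σ x = w) ≤ #(A.filter fun σ => σ x = w') := by
    intro w' hw'
    apply card_le_card_of_injOn (fun σ => swap w w' * σ * swap w w')
    · intro σ hσ
      simp only [coe_filter, Set.mem_ofPred_eq] at hσ ⊢
      refine ⟨hA w hw w' hw' σ hσ.1, ?_⟩
      have h3 : swap w w' x = x :=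
        swap_apply_of_ne_of_ne (fun h => hx (h ▸ hw)) (fun h => hx (h ▸ hw'))
      simp [Perm.mul_apply, h3, hσ.2]
    · intro σ _ τ _ h
      simpa using h
  calc #W * #(A.filter fun σ => σ x = w) = ∑ w' ∈ W, #(A.filter fun σ => σ x = w) := by simp
    _ ≤ ∑ w' ∈ W, #(A.filter fun σ => σ x = w') := sum_le_sum h1
    _ = #(A.filter fun σ => σ x ∈ W) := by
      rw [card_eq_sum_card_fiberwise (f := fun σ => σ x) (t := W)
        (by intro σ hσ; simp at hσ; exact hσ.2)]
      apply sum_congr rfl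
      intro w' hw'
      congr 1
      ext σ
      simp only [mem_filter]
      constructor
      · rintro ⟨a, b⟩; exact ⟨⟨a, b ▸ hw'⟩, b⟩
      · rintro ⟨⟨a, _⟩, b⟩; exact ⟨a, b⟩
    _ ≤ #A := card_filter_le _ _

theorem card_matchings_apply_eq {P : Type} [Fintype P] [DecidableEq P] {x y : P} (h : x ≠ y) :
    (Fintype.card P - 1) * #((matchings P).filter fun σ => σ x = y) ≤ #(matchings P) := by
  have := card_mul_filter_apply_eq_le (matchings P) (univ.erase x) x (by simp)
    (fun w _ w' _ σ hσ => conj_mem_matchings _ _ hσ) y (by simpa using h.symm)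
  rwa [card_erase_of_mem (mem_univ _), card_univ] at this

theorem card_matchings_apply_eq_apply_eq {P : Type} [Fintype P] [DecidableEq P] {x y z w : P}
    (hxy : x ≠ y) (hxz : x ≠ z) (hyz : y ≠ z) (hxw : x ≠ w) (hyw : y ≠ w) (hzw : z ≠ w) :
    (Fintype.card P - 3) * ((Fintype.card P - 1) *
      #((matchings P).filter fun σ => σ x = z ∧ σ y = w)) ≤ #(matchings P) := by
  have h1 := card_mul_filter_apply_eq_le ((matchings P).filter fun σ => σ x = z)
    (univ \ {x, y, z}) y (by simp) (by
      intro a ha b hb σ hσ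
      simp only [mem_filter, Finset.mem_sdiff, mem_univ, true_and, mem_insert, mem_singleton,
        not_or] at ha hb hσ ⊢
      refine ⟨conj_mem_matchings _ _ hσ.1, ?_⟩
      rw [Perm.mul_apply, Perm.mul_apply, swap_apply_of_ne_of_ne (Ne.symm ha.1) (Ne.symm hb.1),
        hσ.2, swap_apply_of_ne_of_ne (Ne.symm ha.2.2) (Ne.symm hb.2.2)]) w
    (by simp [hxw.symm, hyw.symm, hzw.symm])
  have hc : #(univ \ {x, y, z} : Finset P) = Fintype.card P - 3 := by
    rw [card_sdiff_of_subset (subset_univ _), card_univ, card_eq_three.2 ⟨x, y, z, hxy, hxz, hyz, rfl⟩]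
  rw [hc, filter_filter] at h1
  calc _ = (Fintype.card P - 1) * ((Fintype.card P - 3) *
        #((matchings P).filter fun σ => σ x = z ∧ σ y = w)) := by ring
    _ ≤ (Fintype.card P - 1) * #((matchings P).filter fun σ => σ x = z) :=
        Nat.mul_le_mul_left _ h1
    _ ≤ _ := card_matchings_apply_eq hxz

section
variable {P V : Type} [Fintype P] [DecidableEq P] [DecidableEq V]

theorem card_matchings_same_vertex (vert : P → V) (d : ℕ)
    (hd : ∀ p, #(univ.filter fun q => vert q = vert p) ≤ d) {x y : P} (hxy : x ≠ y) :
    (Fintype.card P - 3) * ((Fintype.card P - 1) *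
      #((matchings P).filter fun σ => vert (σ x) = vert (σ y))) ≤
      (d + 1) * Fintype.card P * #(matchings P) := by
  set N := Fintype.card P
  -- the pairs of admissible partners for `x` and `y`, when these are not matched to one another
  set T := univ.filter fun q : P × P => vert q.2 = vert q.1 ∧ x ≠ q.1 ∧ y ≠ q.1 ∧ x ≠ q.2 ∧
    y ≠ q.2 ∧ q.1 ≠ q.2
  have hT : #T ≤ N * d := by
    calc #T ≤ #(univ.filter fun q : P × P => vert q.2 = vert q.1) := by
          apply card_le_card; intro q; simp only [T, mem_filter, mem_univ, true_and]; tauto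
      _ = ∑ p : P, #(univ.filter fun q => vert q = vert p) := by
          rw [card_filter, ← univ_product_univ, sum_product]
          apply sum_congr rfl; intro p _; rw [card_filter]
      _ ≤ ∑ p : P, d := sum_le_sum fun p _ => hd p
      _ = N * d := by simp [N]
  have hsub : ((matchings P).filter fun σ => vert (σ x) = vert (σ y)) ⊆
      ((matchings P).filter fun σ => σ x = y) ∪
      T.biUnion fun q => (matchings P).filter fun σ => σ x = q.1 ∧ σ y = q.2 := by
    intro σ hσ
    simp only [mem_filter, mem_matchings, mem_union, mem_biUnion, T, mem_univ, true_and] at hσ ⊢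
    obtain ⟨⟨h1, h2⟩, h3⟩ := hσ
    by_cases h : σ x = y
    · exact Or.inl ⟨⟨h1, h2⟩, h⟩
    · right
      refine ⟨(σ x, σ y), ⟨h3.symm, (h1 x).symm, Ne.symm h, ?_, (h1 y).symm, ?_⟩, ⟨h1, h2⟩, rfl, rfl⟩
      · intro h'; apply h; rw [h', h2]
      · intro h'; exact hxy (σ.injective h')
  have hcard := (card_le_card hsub).trans ((card_union_le _ _).trans
    (Nat.add_le_add_left card_biUnion_le _))
  calc _ ≤ (N - 3) * ((N - 1) * (#((matchings P).filter fun σ => σ x = y) +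
        ∑ q ∈ T, #((matchings P).filter fun σ => σ x = q.1 ∧ σ y = q.2))) := by gcongr
    _ = (N - 3) * ((N - 1) * #((matchings P).filter fun σ => σ x = y)) +
        ∑ q ∈ T, (N - 3) * ((N - 1) *
          #((matchings P).filter fun σ => σ x = q.1 ∧ σ y = q.2)) := by
        rw [mul_add, mul_add, mul_sum, mul_sum]
    _ ≤ N * #(matchings P) + ∑ q ∈ T, #(matchings P) := by
        apply Nat.add_le_add
        · exact Nat.mul_le_mul (Nat.sub_le _ _) (card_matchings_apply_eq hxy)
        · apply sum_le_sum
          intro q hq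
          simp only [T, mem_filter, mem_univ, true_and] at hq
          exact card_matchings_apply_eq_apply_eq hxy hq.2.1 hq.2.2.1 hq.2.2.2.1 hq.2.2.2.2.1
            hq.2.2.2.2.2
    _ ≤ N * #(matchings P) + (N * d) * #(matchings P) := by
        rw [sum_const, smul_eq_mul]; gcongr
    _ = _ := by ring

/-- The expected value of `bad` under a uniform matching is bounded in terms of `d` only. -/
theorem sum_bad_le (vert : P → V) (d : ℕ)
    (hd : ∀ p, #(univ.filter fun q => vert q = vert p) ≤ d) (hN : 5 ≤ Fintype.card P) :
    ∑ σ ∈ matchings P, bad vert σ ≤ 4 * d * (d + 1) * #(matchings P) := by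
  set N := Fintype.card P with hNdef
  set Q := univ.filter fun q : P × P => q.1 ≠ q.2 ∧ vert q.2 = vert q.1
  have hQ : #Q ≤ N * d := by
    calc #Q ≤ #(univ.filter fun q : P × P => vert q.2 = vert q.1) := by
          apply card_le_card; intro q; simp only [Q, mem_filter, mem_univ, true_and]; tauto
      _ = ∑ p : P, #(univ.filter fun q => vert q = vert p) := by
          rw [card_filter, ← univ_product_univ, sum_product]
          apply sum_congr rfl; intro p _; rw [card_filter]
      _ ≤ ∑ p : P, d := sum_le_sum fun p _ => hd p
      _ = N * d := by simp [N]
  have h1 : ∑ σ ∈ matchings P, bad vert σ =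
      ∑ q ∈ Q, #((matchings P).filter fun σ => vert (σ q.1) = vert (σ q.2)) := by
    have h := sum_card_bipartiteAbove_eq_sum_card_bipartiteBelow (s := matchings P) (t := Q)
      (fun σ q => vert (σ q.1) = vert (σ q.2))
    rw [show ∑ σ ∈ matchings P, bad vert σ = ∑ σ ∈ matchings P,
      #(Q.bipartiteAbove (fun σ q => vert (σ q.1) = vert (σ q.2)) σ) from ?_, h]
    · rfl
    · apply sum_congr rfl
      intro σ _
      unfold bad bipartiteAbove
      rw [filter_filter]
      congr 1; ext q; simp only [mem_filter, mem_univ, true_and]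
      tauto
  have h2 : (N - 3) * (N - 1) * ∑ σ ∈ matchings P, bad vert σ ≤
      (N * d) * ((d + 1) * N * #(matchings P)) := by
    rw [h1, mul_sum]
    calc _ ≤ ∑ q ∈ Q, ((d + 1) * N * #(matchings P)) := by
          apply sum_le_sum
          intro q hq
          simp only [Q, mem_filter, mem_univ, true_and] at hq
          rw [mul_assoc]
          exact card_matchings_same_vertex vert d hd hq.1
      _ ≤ _ := by rw [sum_const, smul_eq_mul]; gcongr
  have h3 : N * N ≤ 4 * ((N - 3) * (N - 1)) := by
    obtain ⟨m, hm⟩ := Nat.exists_eq_add_of_le hN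
    rw [hm, show 5 + m - 3 = m + 2 by omega, show 5 + m - 1 = m + 4 by omega]
    nlinarith
  have hN2 : 0 < N * N := by positivity
  apply Nat.le_of_mul_le_mul_left _ hN2
  calc N * N * ∑ σ ∈ matchings P, bad vert σ
      ≤ 4 * ((N - 3) * (N - 1)) * ∑ σ ∈ matchings P, bad vert σ := by gcongr
    _ = 4 * ((N - 3) * (N - 1) * ∑ σ ∈ matchings P, bad vert σ) := by ring
    _ ≤ 4 * ((N * d) * ((d + 1) * N * #(matchings P))) := by gcongr
    _ = _ := by ring

/-- Markov's inequality for `bad`. -/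
theorem card_matchings_le_two_mul (vert : P → V) (d : ℕ)
    (hd : ∀ p, #(univ.filter fun q => vert q = vert p) ≤ d) (hN : 5 ≤ Fintype.card P) :
    #(matchings P) ≤ 2 * #((matchings P).filter fun σ => bad vert σ ≤ 8 * d * (d + 1)) := by
  have h1 := sum_bad_le vert d hd hN
  have h2 : (8 * d * (d + 1) + 1) *
      #((matchings P).filter fun σ => ¬ bad vert σ ≤ 8 * d * (d + 1)) ≤
      ∑ σ ∈ matchings P, bad vert σ := by
    calc _ = ∑ σ ∈ (matchings P).filter fun σ => ¬ bad vert σ ≤ 8 * d * (d + 1),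
          (8 * d * (d + 1) + 1) := by rw [sum_const, smul_eq_mul, mul_comm]
      _ ≤ ∑ σ ∈ (matchings P).filter fun σ => ¬ bad vert σ ≤ 8 * d * (d + 1), bad vert σ := by
          apply sum_le_sum
          intro σ hσ
          have := (mem_filter.1 hσ).2
          omega
      _ ≤ _ := sum_le_sum_of_subset (filter_subset _ _)
  have h3 := card_filter_add_card_filter_not (s := matchings P)
    (fun σ => bad vert σ ≤ 8 * d * (d + 1))
  set u := #((matchings P).filter fun σ => bad vert σ ≤ 8 * d * (d + 1))
  set v := #((matchings P).filter fun σ => ¬ bad vert σ ≤ 8 * d * (d + 1))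
  set M := #(matchings P)
  set e := 4 * d * (d + 1) with he
  have e2 : 8 * d * (d + 1) = 2 * e := by rw [he]; ring
  rw [e2] at h2
  have h4 : (2 * e + 1) * v ≤ e * M := h2.trans h1
  by_contra hlt
  push Not at hlt
  have h5 : M < 2 * v := by omega
  nlinarith

/-- A single switching strictly decreases `bad`: one edge through a bad point `y` is switched with
an edge `{q, σ q}` that is not a loop and is far from the ends of `{y, σ y}`. -/
theorem exists_switch (vert : P → V) (d : ℕ)
    (hd : ∀ p, #(univ.filter fun q => vert q = vert p) ≤ d) {σ : Perm P} (hσ : σ ∈ matchings P)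
    (hb : 0 < bad vert σ) (hN : 4 * d + 4 * d * d + bad vert σ < Fintype.card P) :
    ∃ y q, bad vert (swap y q * σ * swap y q) < bad vert σ := by
  rw [mem_matchings] at hσ
  obtain ⟨h1, h2⟩ := hσ
  obtain ⟨⟨x, y⟩, hxy⟩ := card_pos.1 hb
  simp only [mem_filter, mem_univ, true_and] at hxy
  obtain ⟨hne, hv, hsv⟩ := hxy
  set E := (univ.filter fun q => vert q = vert y) ∪ (univ.filter fun q => vert q = vert (σ y))
    with hE
  set D := E ∪ E.biUnion fun t => univ.filter fun q => vert q = vert (σ t) with hD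
  have hEc : #E ≤ 2 * d := by
    refine (card_union_le _ _).trans ?_
    have := hd y; have := hd (σ y); omega
  have hDc : #D ≤ 2 * d + 2 * d * d := by
    refine (card_union_le _ _).trans (Nat.add_le_add hEc ?_)
    refine card_biUnion_le.trans ?_
    calc _ ≤ ∑ t ∈ E, d := sum_le_sum fun t _ => hd (σ t)
      _ ≤ _ := by rw [sum_const, smul_eq_mul]; gcongr
  set F := univ.filter fun q => vert q = vert (σ q) with hF
  have hFc : #F ≤ bad vert σ := by
    apply card_le_card_of_injOn (fun q => (q, σ q))
    · intro q hq
      simp only [hF, coe_filter, mem_univ, true_and, Set.mem_ofPred_eq] at hq ⊢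
      exact ⟨(h1 q).symm, hq, by rw [h2, hq]⟩
    · intro a _ b _ h; exact (Prod.mk.inj h).1
  have hex : ∃ q, q ∉ D ∪ D.image σ ∪ F := by
    by_contra hall
    push Not at hall
    have : Fintype.card P ≤ #(D ∪ D.image σ ∪ F) := by
      rw [← card_univ]; exact card_le_card fun q _ => hall q
    have h3 := card_union_le (D ∪ D.image σ) F
    have h4 := card_union_le D (D.image σ)
    have h5 : #(D.image σ) ≤ #D := card_image_le
    have h6 : 4 * d + 4 * d * d = 2 * (2 * d + 2 * d * d) := by ring
    omega
  obtain ⟨q, hq⟩ := hex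
  simp only [mem_union, not_or, mem_image, not_exists, not_and] at hq
  obtain ⟨⟨hqD, hqD'⟩, hqF⟩ := hq
  have hsqD : σ q ∉ D := fun h => hqD' _ h (h2 q)
  have hqF' : vert q ≠ vert (σ q) := by simpa [hF] using hqF
  -- membership in the neighbourhood `D` spelled out
  have key : ∀ p, p ∉ D → vert p ≠ vert y ∧ vert p ≠ vert (σ y) ∧
      (∀ t, vert t = vert y → vert p ≠ vert (σ t)) ∧
      (∀ t, vert t = vert (σ y) → vert p ≠ vert (σ t)) := by
    intro p hp
    simp only [hD, hE, mem_union, mem_filter, mem_univ, true_and, mem_biUnion, not_or, not_exists,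
      not_and] at hp
    exact ⟨hp.1.1, hp.1.2, fun t ht => hp.2 t (Or.inl ht), fun t ht => hp.2 t (Or.inr ht)⟩
  obtain ⟨q1, q2, q3, q4⟩ := key q hqD
  obtain ⟨s1, s2, s3, s4⟩ := key _ hsqD
  clear_value D E F
  refine ⟨y, q, ?_⟩
  set τ := swap y q * σ * swap y q with hτ
  have hyq : y ≠ q := fun h => q1 (by rw [h])
  have hyσ : σ y ≠ y := h1 y
  have hqσ : σ q ≠ q := h1 q
  have hσyq : σ y ≠ q := fun h => q2 (by rw [h])
  have hσqy : σ q ≠ y := fun h => s1 (by rw [h])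
  have hσσ : σ y ≠ σ q := fun h => hyq (σ.injective h)
  have τy : τ y = σ q := by
    simp only [hτ, Perm.mul_apply, swap_apply_left]
    exact swap_apply_of_ne_of_ne hσqy hqσ
  have τq : τ q = σ y := by
    simp only [hτ, Perm.mul_apply, swap_apply_right]
    exact swap_apply_of_ne_of_ne hyσ hσyq
  have τsy : τ (σ y) = q := by
    simp only [hτ, Perm.mul_apply]
    rw [swap_apply_of_ne_of_ne hyσ hσyq, h2, swap_apply_left]
  have τsq : τ (σ q) = y := by
    simp only [hτ, Perm.mul_apply]
    rw [swap_apply_of_ne_of_ne hσqy hqσ, h2, swap_apply_right]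
  have τo : ∀ t, t ≠ y → t ≠ q → t ≠ σ y → t ≠ σ q → τ t = σ t := by
    intro t a b c e
    simp only [hτ, Perm.mul_apply]
    rw [swap_apply_of_ne_of_ne a b]
    apply swap_apply_of_ne_of_ne
    · intro h; apply c; rw [← h, h2]
    · intro h; apply e; rw [← h, h2]
  clear_value τ
  have far : ∀ s t, s ≠ t → vert s = vert t → vert (τ s) = vert (τ t) →
      s ≠ y ∧ s ≠ q ∧ s ≠ σ y ∧ s ≠ σ q := by
    intro s t hst hv1 hv2
    by_cases c1 : t = y
    · subst c1; rw [τy] at hv2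
      refine ⟨hst, ?_, ?_, ?_⟩
      · rintro rfl; exact q1 hv1
      · rintro rfl; rw [τsy] at hv2; exact hqF' hv2
      · rintro rfl; exact s1 hv1
    by_cases c2 : t = q
    · subst c2; rw [τq] at hv2
      refine ⟨?_, hst, ?_, ?_⟩
      · rintro rfl; exact q1 hv1.symm
      · rintro rfl; exact q2 hv1.symm
      · rintro rfl; exact hqF' hv1.symm
    by_cases c3 : t = σ y
    · subst c3; rw [τsy] at hv2
      refine ⟨?_, ?_, hst, ?_⟩
      · rintro rfl; rw [τy] at hv2; exact hqF' hv2.symm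
      · rintro rfl; exact q2 hv1
      · rintro rfl; exact s2 hv1
    by_cases c4 : t = σ q
    · subst c4; rw [τsq] at hv2
      refine ⟨?_, ?_, ?_, hst⟩
      · rintro rfl; exact s1 hv1.symm
      · rintro rfl; exact hqF' hv1
      · rintro rfl; exact s2 hv1.symm
    rw [τo t c1 c2 c3 c4] at hv2
    refine ⟨?_, ?_, ?_, ?_⟩
    · rintro rfl; rw [τy] at hv2; exact s3 t hv1.symm hv2
    · rintro rfl; rw [τq] at hv2
      exact q4 (σ t) hv2.symm (by rw [h2, hv1])
    · rintro rfl; rw [τsy] at hv2; exact q4 t hv1.symm hv2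
    · rintro rfl; rw [τsq] at hv2
      exact s3 (σ t) hv2.symm (by rw [h2, hv1])
  apply card_lt_card
  rw [Finset.ssubset_iff_of_subset]
  · refine ⟨(x, y), by simp [hne, hv, hsv], ?_⟩
    simp only [mem_filter, mem_univ, true_and]
    rintro ⟨a, b, c⟩
    exact (far y x a.symm b.symm c.symm).1 rfl
  · rintro ⟨s, t⟩ hst
    simp only [mem_filter, mem_univ, true_and] at hst ⊢
    obtain ⟨a, b, c⟩ := hst
    have f1 := far s t a b c
    have f2 := far t s a.symm b.symm c.symm
    rw [τo s f1.1 f1.2.1 f1.2.2.1 f1.2.2.2, τo t f2.1 f2.2.1 f2.2.2.1 f2.2.2.2] at c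
    exact ⟨a, b, c⟩

/-- Undoing a switching `(y, q)` recovers the matching, so a switching is at most `N ^ 2`-to-one. -/
theorem card_bad_le_succ (vert : P → V) (d : ℕ)
    (hd : ∀ p, #(univ.filter fun q => vert q = vert p) ≤ d) (b : ℕ)
    (hN : 4 * d + 4 * d * d + (b + 1) < Fintype.card P) :
    #((matchings P).filter fun σ => bad vert σ ≤ b + 1) ≤
      Fintype.card P ^ 2 * #((matchings P).filter fun σ => bad vert σ ≤ b) := by
  have hsub : ((matchings P).filter fun σ => bad vert σ ≤ b + 1) ⊆
      ((univ : Finset (P × P)) ×ˢ ((matchings P).filter fun σ => bad vert σ ≤ b)).image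
        fun z => swap z.1.1 z.1.2 * z.2 * swap z.1.1 z.1.2 := by
    intro σ hσ
    obtain ⟨hm, hb⟩ := mem_filter.1 hσ
    simp only [mem_image, mem_product, mem_univ, true_and, mem_filter]
    rcases Nat.eq_zero_or_pos (bad vert σ) with h0 | hpos
    · have hPpos : 0 < Fintype.card P := by omega
      obtain ⟨p⟩ := Fintype.card_pos_iff.1 hPpos
      exact ⟨((p, p), σ), ⟨hm, by simp [h0]⟩, by ext; simp⟩
    · obtain ⟨y, q, h⟩ := exists_switch vert d hd hm hpos (by omega)
      refine ⟨((y, q), swap y q * σ * swap y q), ⟨conj_mem_matchings _ _ hm, by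
        simp only; omega⟩, ?_⟩
      ext t; simp
  refine (card_le_card hsub).trans (card_image_le.trans ?_)
  rw [card_product, card_univ, Fintype.card_prod, pow_two]

theorem card_bad_le_pow (vert : P → V) (d : ℕ)
    (hd : ∀ p, #(univ.filter fun q => vert q = vert p) ≤ d) (b : ℕ)
    (hN : 4 * d + 4 * d * d + b < Fintype.card P) :
    #((matchings P).filter fun σ => bad vert σ ≤ b) ≤
      Fintype.card P ^ (2 * b) * #((matchings P).filter fun σ => bad vert σ = 0) := by
  induction b with
  | zero => simp
  | succ b ih =>
    refine (card_bad_le_succ vert d hd b hN).trans ?_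
    calc _ ≤ Fintype.card P ^ 2 * (Fintype.card P ^ (2 * b) *
          #((matchings P).filter fun σ => bad vert σ = 0)) :=
          Nat.mul_le_mul_left _ (ih (by omega))
      _ = _ := by ring

/-- A uniform matching is simple with at least inverse polynomial probability. -/
theorem card_matchings_le_simple (vert : P → V) (d : ℕ)
    (hd : ∀ p, #(univ.filter fun q => vert q = vert p) ≤ d)
    (hN : 4 * d + 4 * d * d + 8 * d * (d + 1) + 5 ≤ Fintype.card P) :
    #(matchings P) ≤ 2 * Fintype.card P ^ (16 * d * (d + 1)) *
      #((matchings P).filter fun σ => bad vert σ = 0) := by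
  refine (card_matchings_le_two_mul vert d hd (by omega)).trans ?_
  have := card_bad_le_pow vert d hd (8 * d * (d + 1)) (by omega)
  rw [show 2 * (8 * d * (d + 1)) = 16 * d * (d + 1) by ring] at this
  rw [mul_assoc 2 (Fintype.card P ^ _)]
  exact Nat.mul_le_mul_left _ this

end

/-! ### From matchings to graphs -/

/-- The graph on `V` obtained from a matching of the half-edges `V × Fin d`, with loops and
multiplicities forgotten. -/
def graphOf {V : Type} {d : ℕ} (σ : Perm (V × Fin d)) : SimpleGraph V :=
  SimpleGraph.fromRel fun u v => ∃ i, (σ (u, i)).1 = v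

section
variable {V : Type} [Fintype V] [DecidableEq V] {d : ℕ}

theorem graphOf_adj {σ : Perm (V × Fin d)} (hσ : σ ∈ matchings (V × Fin d)) {u v : V} :
    (graphOf σ).Adj u v ↔ u ≠ v ∧ ∃ i, (σ (u, i)).1 = v := by
  rw [mem_matchings] at hσ
  simp only [graphOf, SimpleGraph.fromRel_adj]
  constructor
  · rintro ⟨h, h1 | ⟨i, hi⟩⟩
    · exact ⟨h, h1⟩
    · refine ⟨h, (σ (v, i)).2, ?_⟩
      rw [← hi, Prod.mk.eta, hσ.2]
  · rintro ⟨h, h1⟩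
    exact ⟨h, Or.inl h1⟩

theorem bad_fst_eq_zero {σ : Perm (V × Fin d)} :
    bad Prod.fst σ = 0 ↔ ∀ v i j, (σ (v, i)).1 = (σ (v, j)).1 → i = j := by
  rw [bad, card_eq_zero, filter_eq_empty_iff]
  constructor
  · intro h v i j hij
    by_contra hne
    exact h (mem_univ ((v, i), (v, j))) ⟨by simpa using hne, rfl, hij⟩
  · rintro h ⟨⟨v, i⟩, ⟨w, j⟩⟩ - ⟨h1, h2, h3⟩
    simp only at h2
    subst h2
    exact h1 (by rw [h v i j h3])

theorem fst_ne_of_bad_eq_zero {σ : Perm (V × Fin d)} (hσ : σ ∈ matchings (V × Fin d))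
    (hb : bad Prod.fst σ = 0) (x : V × Fin d) : (σ x).1 ≠ x.1 := by
  rw [mem_matchings] at hσ
  intro h
  rw [bad_fst_eq_zero] at hb
  apply hσ.1 x
  have h1 := hb x.1 x.2 (σ x).2 (by
    have : (x.1, (σ x).2) = σ x := by rw [← h]
    rw [this, hσ.2, Prod.mk.eta, h])
  ext
  · exact h
  · rw [← h1]

/-- A simple matching is determined by the vertices to which its half-edges lead. -/
theorem eq_of_fst_eq {σ τ : Perm (V × Fin d)} (hσ : σ ∈ matchings (V × Fin d))
    (hτ : τ ∈ matchings (V × Fin d)) (hb : bad Prod.fst σ = 0)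
    (h : ∀ x, (σ x).1 = (τ x).1) : σ = τ := by
  rw [mem_matchings] at hσ hτ
  rw [bad_fst_eq_zero] at hb
  ext1 x
  have h1 : ((σ x).1, (τ x).2) = τ x := by rw [h x]
  refine Prod.ext (h x) (hb (σ x).1 _ _ ?_)
  rw [Prod.mk.eta, hσ.2, h, h1, hτ.2]

open Classical in
theorem card_simple_graphOf_eq_le (G : SimpleGraph V) :
    #((matchings (V × Fin d)).filter fun σ => bad Prod.fst σ = 0 ∧ graphOf σ = G) ≤
      d.factorial ^ Fintype.card V := by
  rcases ((matchings (V × Fin d)).filter fun σ => bad Prod.fst σ = 0 ∧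
    graphOf σ = G).eq_empty_or_nonempty with h0 | ⟨σ0, hσ0⟩
  · rw [h0]; simp
  have mk : ∀ σ : {σ // σ ∈ (matchings (V × Fin d)).filter fun σ => bad Prod.fst σ = 0 ∧
      graphOf σ = G}, ∀ v, ∃ e : Fin d ≃ G.neighborSet v, ∀ i, (e i : V) = (σ.1 (v, i)).1 := by
    rintro ⟨σ, hσ⟩ v
    obtain ⟨hm, hb, rfl⟩ := mem_filter.1 hσ
    have hmem : ∀ i, (σ (v, i)).1 ∈ (graphOf σ).neighborSet v := fun i => by
      rw [SimpleGraph.mem_neighborSet, graphOf_adj hm]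
      exact ⟨(fst_ne_of_bad_eq_zero hm hb (v, i)).symm, i, rfl⟩
    refine ⟨Equiv.ofBijective (fun i => ⟨(σ (v, i)).1, hmem i⟩) ⟨?_, ?_⟩, fun i => rfl⟩
    · intro i j hij
      exact bad_fst_eq_zero.1 hb v i j (congrArg Subtype.val hij)
    · rintro ⟨w, hw⟩
      rw [SimpleGraph.mem_neighborSet, graphOf_adj hm] at hw
      obtain ⟨-, i, hi⟩ := hw
      exact ⟨i, Subtype.ext hi⟩
  choose F hF using mk
  have hinj : Function.Injective F := by
    intro σ τ h
    apply Subtype.ext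
    refine eq_of_fst_eq (mem_filter.1 σ.2).1 (mem_filter.1 τ.2).1 (mem_filter.1 σ.2).2.1 ?_
    rintro ⟨v, i⟩
    rw [← hF, ← hF, h]
  have h1 := Fintype.card_le_of_injective F hinj
  rw [Fintype.card_coe] at h1
  refine h1.trans ?_
  rw [Fintype.card_pi]
  have h2 : ∀ v, Fintype.card (Fin d ≃ G.neighborSet v) = d.factorial := fun v => by
    rw [Fintype.card_equiv (F ⟨σ0, hσ0⟩ v), Fintype.card_fin]
  simp [h2]

open Classical in
/-- Every `d`-regular graph comes from at most `d! ^ |V|` simple matchings. -/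
theorem card_simple_le :
    #((matchings (V × Fin d)).filter fun σ => bad Prod.fst σ = 0) ≤ d.factorial ^ Fintype.card V *
      #(univ.filter fun G : SimpleGraph V => ∀ v, (G.neighborSet v).ncard = d) := by
  refine (card_le_mul_card_image (f := graphOf) _ (d.factorial ^ Fintype.card V) ?_).trans ?_
  · intro G _
    rw [filter_filter]
    exact card_simple_graphOf_eq_le G
  · apply Nat.mul_le_mul_left
    apply card_le_card
    intro G hG
    obtain ⟨σ, hσ, rfl⟩ := mem_image.1 hG
    obtain ⟨hm, hb⟩ := mem_filter.1 hσ
    simp only [mem_filter, mem_univ, true_and]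
    intro v
    have : (graphOf σ).neighborSet v = Set.range fun i => (σ (v, i)).1 := by
      ext w
      rw [SimpleGraph.mem_neighborSet, graphOf_adj hm]
      constructor
      · rintro ⟨-, h⟩; exact h
      · rintro ⟨i, rfl⟩
        exact ⟨(fst_ne_of_bad_eq_zero hm hb (v, i)).symm, i, rfl⟩
    rw [this, ← Set.image_univ, Set.ncard_image_of_injective]
    · simp [Set.ncard_univ]
    · intro i j hij; exact bad_fst_eq_zero.1 hb v i j hij

/-- Numberings of the neighbours of every vertex of a `d`-regular graph assemble into a matching of
the half-edges. -/
theorem exists_matching_of_labelling (G : SimpleGraph V) (e : ∀ v, Fin d ≃ G.neighborSet v) :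
    ∃ σ ∈ matchings (V × Fin d), ∀ v i, (σ (v, i)).1 = (e v i : V) := by
  let R : V × Fin d → V × Fin d → Prop := fun x y =>
    (e x.1 x.2 : V) = y.1 ∧ (e y.1 y.2 : V) = x.1
  have hex : ∀ x, ∃ y, R x y := by
    rintro ⟨v, i⟩
    refine ⟨((e v i : V), (e (e v i : V)).symm ⟨v, (e v i).2.symm⟩), rfl, ?_⟩
    simp
  have huniq : ∀ x y z, R x y → R x z → y = z := by
    rintro ⟨v, i⟩ ⟨u, j⟩ ⟨w, l⟩ ⟨h1, h2⟩ ⟨h3, h4⟩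
    simp only at h1 h2 h3 h4
    obtain rfl : u = w := h1.symm.trans h3
    have : e u j = e u l := Subtype.ext (h2.trans h4.symm)
    rw [(e u).injective this]
  choose f hf using hex
  have hff : Function.Involutive f := fun x => huniq (f x) _ _ (hf (f x)) ⟨(hf x).2, (hf x).1⟩
  refine ⟨hff.toPerm, ?_, fun v i => ((hf (v, i)).1).symm⟩
  rw [mem_matchings]
  refine ⟨fun x hx => ?_, hff⟩
  have h1 := (hf x).1
  rw [show f x = x from hx] at h1
  have h2 : G.Adj x.1 (e x.1 x.2) := (e x.1 x.2).2
  rw [h1] at h2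
  exact G.loopless.irrefl _ h2

open Classical in
/-- Every graph of `𝒢` comes from `d! ^ |V|` matchings, one for each numbering of the neighbours of
every vertex, and these matchings inherit the prescribed numbers `b v j` of neighbours of `v` in the
cluster `j`. -/
theorem card_graphs_le {K : Type} [DecidableEq K] (p : V → K) (b : V → K → ℕ)
    (𝒢 : Finset (SimpleGraph V))
    (h𝒢 : ∀ G ∈ 𝒢, (∀ v, (G.neighborSet v).ncard = d) ∧
      ∀ v j, degIn G v (p ⁻¹' {j}) = b v j) :
    d.factorial ^ Fintype.card V * #𝒢 ≤
      #((matchings (V × Fin d)).filter fun σ => ∀ v j,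
        #(univ.filter fun i => p (σ (v, i)).1 = j) = b v j) := by
  set T := (matchings (V × Fin d)).filter fun σ => ∀ v j,
        #(univ.filter fun i => p (σ (v, i)).1 = j) = b v j with hT
  have h1 : ∀ G ∈ 𝒢, d.factorial ^ Fintype.card V ≤ #(T.filter fun σ => graphOf σ = G) := by
    intro G hG
    obtain ⟨hreg, hdeg⟩ := h𝒢 G hG
    choose F hFm hF using exists_matching_of_labelling (d := d) G
    have hcard : Fintype.card (∀ v, Fin d ≃ G.neighborSet v) = d.factorial ^ Fintype.card V := by
      rw [Fintype.card_pi]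
      have h2 : ∀ v, Fintype.card (Fin d ≃ G.neighborSet v) = d.factorial := fun v => by
        have h3 : Fintype.card (G.neighborSet v) = d := by
          rw [← hreg v, Set.ncard_eq_toFinset_card', Set.toFinset_card]
        have e0 : Fin d ≃ G.neighborSet v := (Fintype.equivFinOfCardEq h3).symm
        rw [Fintype.card_equiv e0, Fintype.card_fin]
      simp [h2]
    rw [← hcard, ← card_univ]
    apply card_le_card_of_injOn F
    · intro e _
      have hg : graphOf (F e) = G := by
        ext u w
        rw [graphOf_adj (hFm e)]
        constructor
        · rintro ⟨-, i, rfl⟩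
          rw [hF]; exact (e u i).2
        · intro h
          refine ⟨h.ne, (e u).symm ⟨w, h⟩, ?_⟩
          rw [hF]; simp
      simp only [coe_filter, Set.mem_ofPred_eq, hT, mem_filter]
      refine ⟨⟨hFm e, fun v j => ?_⟩, hg⟩
      rw [← hdeg v j, degIn]
      have : p ⁻¹' {j} ∩ G.neighborSet v =
          (fun i => (e v i : V)) '' {i | p (F e (v, i)).1 = j} := by
        ext w
        simp only [Set.mem_inter_iff, Set.mem_preimage, Set.mem_singleton_iff, Set.mem_image,
          Set.mem_ofPred_eq, hF]
        constructor
        · rintro ⟨h, hw⟩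
          exact ⟨(e v).symm ⟨w, hw⟩, by simpa using h, by simp⟩
        · rintro ⟨i, hi, rfl⟩
          exact ⟨hi, (e v i).2⟩
      rw [this, Set.ncard_image_of_injective _
        (fun i j h => (e v).injective (Subtype.ext h)), Set.ncard_eq_toFinset_card']
      congr 1; ext i; simp
    · intro e _ e' _ h
      funext v
      ext i
      rw [← hF, ← hF, h]
  calc d.factorial ^ Fintype.card V * #𝒢 = ∑ G ∈ 𝒢, d.factorial ^ Fintype.card V := by
        rw [sum_const, smul_eq_mul, mul_comm]
    _ ≤ ∑ G ∈ 𝒢, #(T.filter fun σ => graphOf σ = G) := sum_le_sum h1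
    _ = #(T.filter fun σ => graphOf σ ∈ 𝒢) := by
        rw [card_eq_sum_card_fiberwise (f := graphOf) (t := 𝒢)
          (by intro σ hσ; simp at hσ; exact hσ.2)]
        apply sum_congr rfl
        intro G hG
        congr 1
        ext σ
        simp only [mem_filter]
        constructor
        · rintro ⟨a, b⟩; exact ⟨⟨a, b ▸ hG⟩, b⟩
        · rintro ⟨⟨a, _⟩, b⟩; exact ⟨a, b⟩
    _ ≤ #T := card_filter_le _ _

end

/-! ### Matchings compatible with a partition -/

section
variable {P K : Type} [Fintype P] [DecidableEq P] [Fintype K] [LinearOrder K]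

/-- The matchings that match every point of colour `(i, j)` with a point of colour `(j, i)`. -/
def colouredMatchings (c : P → K × K) : Finset (Perm P) :=
  (matchings P).filter fun σ => ∀ x, c (σ x) = (c x).swap

/-- Squaring makes the bound symmetric: one factor is used on the classes `(i, j)` with `i < j`, the
other on those with `i > j`, and on the classes `(i, i)` both factors are matchings. -/
theorem card_colouredMatchings_sq_le (c : P → K × K) :
    #(colouredMatchings c) ^ 2 ≤ ∏ z : K × K, (#(univ.filter fun x => c x = z)).factorial := by
  rcases (colouredMatchings c).eq_empty_or_nonempty with h0 | ⟨ρ, hρ⟩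
  · simp [h0]
  have spec : ∀ {σ}, σ ∈ colouredMatchings c →
      (∀ x, σ x ≠ x) ∧ (∀ x, σ (σ x) = x) ∧ ∀ x, c (σ x) = (c x).swap := by
    intro σ hσ
    obtain ⟨h1, h2⟩ := mem_filter.1 hσ
    exact ⟨(mem_matchings.1 h1).1, (mem_matchings.1 h1).2, h2⟩
  have off : ∀ z : K × K, ∀ σ ∈ colouredMatchings c, ∃ f : Perm {x // c x = z},
      ∀ x, (f x : P) = ρ (σ x) := by
    intro z σ hσ
    refine ⟨(ρ * σ).subtypePerm fun x => ?_, fun x => rfl⟩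
    rw [Perm.mul_apply, (spec hρ).2.2, (spec hσ).2.2, Prod.swap_swap]
  have diag : ∀ z : K × K, z.1 = z.2 → ∀ σ ∈ colouredMatchings c,
      ∃ f ∈ matchings {x // c x = z}, ∀ x, (f x : P) = σ x := by
    intro z hz σ hσ
    have hzs : z.swap = z := Prod.ext hz.symm hz
    refine ⟨σ.subtypePerm fun x => ?_, ?_, fun x => rfl⟩
    · rw [(spec hσ).2.2]
      constructor
      · intro h; rw [← hzs, ← h, Prod.swap_swap]
      · intro h; rw [h, hzs]
    · rw [mem_matchings]
      refine ⟨fun x hx => (spec hσ).1 x (congrArg Subtype.val hx), fun x => Subtype.ext ?_⟩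
      exact (spec hσ).2.1 x
  let S : ∀ z : K × K, Finset (Perm {x // c x = z} × Perm {x // c x = z}) := fun z =>
    if z.1 = z.2 then matchings _ ×ˢ matchings _
    else if z.1 < z.2 then univ ×ˢ {1} else {1} ×ˢ univ
  have hS : ∀ z, #(S z) ≤ (#(univ.filter fun x => c x = z)).factorial := by
    intro z
    have hcz : Fintype.card {x // c x = z} = #(univ.filter fun x => c x = z) :=
      Fintype.card_subtype _
    simp only [S]
    split_ifs
    · rw [card_product, ← pow_two, ← hcz]
      exact card_matchings_sq_le _
    · rw [card_product, card_univ, Fintype.card_perm, hcz]; simp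
    · rw [card_product, card_univ, Fintype.card_perm, hcz]; simp
  have hex : ∀ w : colouredMatchings c × colouredMatchings c, ∀ z : K × K,
      ∃ f ∈ S z, (z.1 = z.2 → (∀ x, (f.1 x : P) = w.1.1 x) ∧ ∀ x, (f.2 x : P) = w.2.1 x) ∧
        (z.1 < z.2 → ∀ x, (f.1 x : P) = ρ (w.1.1 x)) ∧
        (z.2 < z.1 → ∀ x, (f.2 x : P) = ρ (w.2.1 x)) := by
    rintro ⟨⟨σ, hσ⟩, ⟨τ, hτ⟩⟩ z
    simp only [S]
    rcases lt_trichotomy z.1 z.2 with h | h | h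
    · obtain ⟨f, hf⟩ := off z σ hσ
      exact ⟨(f, 1), by simp [h, h.ne], fun h' => absurd h' h.ne, fun _ => hf,
        fun h' => absurd h' h.not_gt⟩
    · obtain ⟨f, hf, hf'⟩ := diag z h σ hσ
      obtain ⟨g, hg, hg'⟩ := diag z h τ hτ
      exact ⟨(f, g), by simp [h, hf, hg], fun _ => ⟨hf', hg'⟩, fun h' => absurd h h'.ne,
        fun h' => absurd h h'.ne'⟩
    · obtain ⟨f, hf⟩ := off z τ hτ
      exact ⟨(1, f), by simp [h.not_gt, h.ne'], fun h' => absurd h' h.ne',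
        fun h' => absurd h' h.not_gt, fun _ => hf⟩
  choose F hFS hF1 hF2 hF3 using hex
  -- two coloured matchings agreeing on a class agree on the swapped class
  have flip : ∀ σ ∈ colouredMatchings c, ∀ σ' ∈ colouredMatchings c, ∀ x,
      σ (σ x) = σ' (σ x) → σ x = σ' x := by
    intro σ hσ σ' hσ' x h
    rw [(spec hσ).2.1] at h
    have h2 := congrArg σ' h
    rw [(spec hσ').2.1] at h2
    exact h2.symm
  have hinj : Function.Injective F := by
    rintro ⟨⟨σ, hσ⟩, ⟨τ, hτ⟩⟩ ⟨⟨σ', hσ'⟩, ⟨τ', hτ'⟩⟩ h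
    have hlt : ∀ x, (c x).1 < (c x).2 → σ x = σ' x := by
      intro x hx
      have a := hF2 (⟨σ, hσ⟩, ⟨τ, hτ⟩) (c x) hx ⟨x, rfl⟩
      have b := hF2 (⟨σ', hσ'⟩, ⟨τ', hτ'⟩) (c x) hx ⟨x, rfl⟩
      rw [h, b] at a
      exact (ρ.injective a).symm
    have hgt : ∀ x, (c x).2 < (c x).1 → τ x = τ' x := by
      intro x hx
      have a := hF3 (⟨σ, hσ⟩, ⟨τ, hτ⟩) (c x) hx ⟨x, rfl⟩
      have b := hF3 (⟨σ', hσ'⟩, ⟨τ', hτ'⟩) (c x) hx ⟨x, rfl⟩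
      rw [h, b] at a
      exact (ρ.injective a).symm
    have heq : ∀ x, (c x).1 = (c x).2 → σ x = σ' x ∧ τ x = τ' x := by
      intro x hx
      have a := hF1 (⟨σ, hσ⟩, ⟨τ, hτ⟩) (c x) hx
      have b := hF1 (⟨σ', hσ'⟩, ⟨τ', hτ'⟩) (c x) hx
      rw [← h] at b
      exact ⟨(a.1 ⟨x, rfl⟩).symm.trans (b.1 ⟨x, rfl⟩), (a.2 ⟨x, rfl⟩).symm.trans (b.2 ⟨x, rfl⟩)⟩
    have e1 : σ = σ' := by
      ext1 x
      rcases lt_trichotomy (c x).1 (c x).2 with hx | hx | hx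
      · exact hlt x hx
      · exact (heq x hx).1
      · exact flip σ hσ σ' hσ' x (hlt _ (by rw [(spec hσ).2.2]; exact hx))
    have e2 : τ = τ' := by
      ext1 x
      rcases lt_trichotomy (c x).1 (c x).2 with hx | hx | hx
      · exact flip τ hτ τ' hτ' x (hgt _ (by rw [(spec hτ).2.2]; exact hx))
      · exact (heq x hx).2
      · exact hgt x hx
    subst e1 e2
    rfl
  calc #(colouredMatchings c) ^ 2
      = #(univ : Finset (colouredMatchings c × colouredMatchings c)) := by
        rw [card_univ, Fintype.card_prod, Fintype.card_coe, pow_two]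
    _ ≤ #(Fintype.piFinset S) := by
        apply card_le_card_of_injOn F
        · intro w _
          simp only [Fintype.coe_piFinset, Set.mem_pi]
          exact fun z _ => hFS w z
        · exact hinj.injOn
    _ = ∏ z, #(S z) := Fintype.card_piFinset _
    _ ≤ _ := prod_le_prod' fun z _ => hS z

end

/-- The maps `Fin d → K` taking each value `j` exactly `a j` times. -/
def typeWords {K : Type} [Fintype K] [DecidableEq K] (d : ℕ) (a : K → ℕ) : Finset (Fin d → K) :=
  univ.filter fun t => ∀ j, #(univ.filter fun i => t i = j) = a j

section
variable {V K : Type} [Fintype V] [Fintype K] [LinearOrder K] {d : ℕ}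

theorem card_colour_class (a : K → K → ℕ) (n : ℕ) (p : V → K)
    (hp : ∀ i, #(univ.filter fun v => p v = i) = n) (t : V → Fin d → K)
    (ht : ∀ v, t v ∈ typeWords d (a (p v))) (z : K × K) :
    #(univ.filter fun x : V × Fin d => (p x.1, t x.1 x.2) = z) = n * a z.1 z.2 := by
  rw [card_filter, ← univ_product_univ, sum_product]
  have h1 : ∀ v, (∑ i : Fin d, if (p v, t v i) = z then 1 else 0) =
      if p v = z.1 then a z.1 z.2 else 0 := by
    intro v
    have h2 := (mem_filter.1 (ht v)).2 z.2
    split_ifs with h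
    · rw [← h, ← h2, card_filter]
      apply sum_congr rfl
      intro i _
      congr 1
      rw [Prod.ext_iff]
      simp [h]
    · apply sum_eq_zero
      intro i _
      rw [if_neg]
      rintro rfl
      exact h rfl
  simp only [h1]
  rw [← sum_filter, sum_const, hp, smul_eq_mul]

variable [DecidableEq V]

/-- The words `t` read at the vertices determine the colours `(p v, t v i)` of the half-edges, and
there are `∏ W_i ^ n` choices of them. -/
theorem card_typed_matchings_sq_le (a : K → K → ℕ) (n : ℕ) (p : V → K)
    (hp : ∀ i, #(univ.filter fun v => p v = i) = n) :
    #((matchings (V × Fin d)).filter fun σ => ∀ v j,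
        #(univ.filter fun i => p (σ (v, i)).1 = j) = a (p v) j) ^ 2 ≤
      (∏ i, #(typeWords d (a i)) ^ n) ^ 2 * ∏ z : K × K, (n * a z.1 z.2).factorial := by
  set T := (matchings (V × Fin d)).filter fun σ => ∀ v j,
        #(univ.filter fun i => p (σ (v, i)).1 = j) = a (p v) j with hT
  set W := Fintype.piFinset fun v => typeWords d (a (p v)) with hW
  have hsub : T ⊆ W.biUnion fun t => colouredMatchings fun x : V × Fin d => (p x.1, t x.1 x.2) := by
    intro σ hσ
    obtain ⟨hm, hj⟩ := mem_filter.1 hσ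
    rw [mem_biUnion]
    refine ⟨fun v i => p (σ (v, i)).1, ?_, ?_⟩
    · rw [hW, Fintype.mem_piFinset]
      intro v
      simp only [typeWords, mem_filter, mem_univ, true_and]
      exact hj v
    · simp only [colouredMatchings, mem_filter]
      refine ⟨hm, fun x => ?_⟩
      simp [(mem_matchings.1 hm).2]
  have hWc : #W = ∏ i, #(typeWords d (a i)) ^ n := by
    rw [hW, Fintype.card_piFinset, ← prod_fiberwise univ p]
    apply prod_congr rfl
    intro i _
    rw [prod_congr rfl (g := fun _ => #(typeWords d (a i)))]
    · rw [prod_const, hp]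
    · intro v hv; rw [(mem_filter.1 hv).2]
  set B := ∏ z : K × K, (n * a z.1 z.2).factorial
  have hcol : ∀ t ∈ W, #(colouredMatchings fun x : V × Fin d => (p x.1, t x.1 x.2)) ≤ Nat.sqrt B := by
    intro t ht
    rw [Nat.le_sqrt']
    refine (card_colouredMatchings_sq_le _).trans (le_of_eq ?_)
    apply prod_congr rfl
    intro z _
    rw [card_colour_class a n p hp t (Fintype.mem_piFinset.1 ht) z]
  have h1 : #T ≤ #W * Nat.sqrt B := by
    refine (card_le_card hsub).trans (card_biUnion_le.trans ((sum_le_sum hcol).trans ?_))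
    rw [sum_const, smul_eq_mul]
  calc #T ^ 2 ≤ (#W * Nat.sqrt B) ^ 2 := Nat.pow_le_pow_left h1 2
    _ = #W ^ 2 * Nat.sqrt B ^ 2 := mul_pow _ _ _
    _ ≤ #W ^ 2 * B := Nat.mul_le_mul_left _ (Nat.sqrt_le' B)
    _ = _ := by rw [hWc]

end

/-! ### Bounds on multinomial coefficients -/

section
variable {K : Type} [DecidableEq K] {d : ℕ}

/-- The vector obtained from `a` by moving one unit from the coordinate `j` to the coordinate `i`. -/
def shiftUnit (a : K → ℕ) (i j : K) : K → ℕ :=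
  fun l => a l + (if l = i then 1 else 0) - (if l = j then 1 else 0)

theorem shiftUnit_inj {a : K → ℕ} (ha : ∀ i, 0 < a i) {i j i' j' : K} (hij : i ≠ j)
    (h : shiftUnit a i j = shiftUnit a i' j') : i = i' ∧ j = j' := by
  have h1 := congrFun h i
  have h2 := congrFun h j
  have a1 := ha i
  have a2 := ha j
  simp only [shiftUnit, if_true, hij, hij.symm, if_false] at h1 h2
  constructor
  · by_contra hne
    rw [if_neg hne] at h1
    split_ifs at h1 <;> omega
  · by_contra hne
    rw [if_neg hne] at h2
    split_ifs at h2 <;> omega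

theorem shiftUnit_ne {a : K → ℕ} {i j : K} (hij : i ≠ j) : shiftUnit a i j ≠ a := by
  intro h
  have h1 := congrFun h i
  simp only [shiftUnit, if_true, hij, if_false] at h1
  omega

variable [Fintype K]

/-- Double counting of the single-letter replacements of a letter `j` by the letter `i`. -/
theorem card_typeWords_shiftUnit (a : K → ℕ) {i j : K} (hij : i ≠ j) :
    #(typeWords d a) * a j ≤ #(typeWords d (shiftUnit a i j)) * (a i + 1) := by
  apply card_mul_le_card_mul (fun t t' : Fin d → K => ∃ s, t s = j ∧ t' = Function.update t s i)
  · intro t ht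
    simp only [typeWords, mem_filter, mem_univ, true_and] at ht
    rw [← ht j]
    apply card_le_card_of_injOn (fun s => Function.update t s i)
    · intro s hs
      simp only [coe_filter, mem_univ, true_and, Set.mem_ofPred_eq] at hs
      simp only [coe_bipartiteAbove, Set.mem_ofPred_eq, typeWords, mem_filter, mem_univ, true_and]
      refine ⟨fun l => ?_, s, hs, rfl⟩
      rw [shiftUnit, ← ht l]
      by_cases hl : l = i
      · subst hl
        have : (univ.filter fun x => Function.update t s l x = l) =
            insert s (univ.filter fun x => t x = l) := by
          ext x
          by_cases hx : x = s <;> simp [Function.update_apply, hx]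
        rw [this, card_insert_of_notMem (by simp [hs, hij.symm])]
        simp [hij]
      · by_cases hl' : l = j
        · subst hl'
          have : (univ.filter fun x => Function.update t s i x = l) =
              (univ.filter fun x => t x = l).erase s := by
            ext x
            by_cases hx : x = s <;> simp [Function.update_apply, hx, hij]
          rw [this, card_erase_of_mem (by simp [hs])]
          simp [hij.symm]
        · simp only [hl, hl', if_false, add_zero, Nat.sub_zero]
          congr 1
          ext x
          by_cases hx : x = s
          · subst hx; simp [Ne.symm hl, hs, Ne.symm hl']
          · simp [Function.update_apply, hx]
    · intro s hs s' hs' h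
      simp only [coe_filter, mem_univ, true_and, Set.mem_ofPred_eq] at hs hs'
      by_contra hne
      have := congrFun h s
      simp only [Function.update_self, Function.update_of_ne hne] at this
      exact hij (this.trans hs)
  · intro t' ht'
    simp only [typeWords, mem_filter, mem_univ, true_and] at ht'
    have h1 := ht' i
    simp only [shiftUnit, if_true, hij, if_false, Nat.sub_zero] at h1
    rw [← h1]
    refine (card_le_card (t := (univ.filter fun x => t' x = i).image
      fun s => Function.update t' s j) ?_).trans card_image_le
    intro t ht
    obtain ⟨-, s, hs, rfl⟩ := (mem_filter.1 ht)
    rw [mem_image]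
    refine ⟨s, by simp, ?_⟩
    rw [Function.update_idem, ← hs, Function.update_eq_self]

theorem prod_shiftUnit {a : K → ℕ} (ha : ∀ i, 0 < a i) (x : K → ℝ) (i j : K) :
    (∏ l, x l ^ shiftUnit a i j l) * x j = (∏ l, x l ^ a l) * x i := by
  have e : ∀ m, x m = ∏ l, x l ^ (if l = m then 1 else 0) := by
    intro m
    rw [prod_eq_single m] <;> simp +contextual
  rw [e j, e i, ← prod_mul_distrib, ← prod_mul_distrib]
  apply prod_congr rfl
  intro l _
  rw [← pow_add, ← pow_add]
  congr 1
  have := ha l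
  rw [shiftUnit]
  split_ifs <;> omega

theorem prod_of_mem_typeWords {a : K → ℕ} (x : K → ℝ) {t : Fin d → K} (ht : t ∈ typeWords d a) :
    ∏ s, x (t s) = ∏ l, x l ^ a l := by
  simp only [typeWords, mem_filter, mem_univ, true_and] at ht
  rw [← prod_fiberwise univ t]
  apply prod_congr rfl
  intro l _
  rw [← ht l, ← prod_const]
  apply prod_congr rfl
  intro s hs
  rw [(mem_filter.1 hs).2]

theorem typeWords_disjoint {a b : K → ℕ} (h : a ≠ b) :
    Disjoint (typeWords d a) (typeWords d b) := by
  rw [Finset.disjoint_left]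
  intro t ha hb
  simp only [typeWords, mem_filter, mem_univ, true_and] at ha hb
  exact h (funext fun l => (ha l).symm.trans (hb l))

/-- The terms of the multinomial expansion of `(∑ x) ^ d` at `a` and at all its unit shifts do not
exceed the whole sum. -/
theorem card_typeWords_mul_le (a : K → ℕ) (ha : ∀ i, 0 < a i) (x : K → ℝ) (hx : ∀ i, 0 < x i) :
    #(typeWords d a) * (∏ l, x l ^ a l) *
      (1 + ∑ z ∈ (univ : Finset K).offDiag, a z.2 * x z.1 / ((a z.1 + 1) * x z.2)) ≤
      (∑ l, x l) ^ d := by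
  have hsum : ∀ b : K → ℕ, ∑ t ∈ typeWords d b, ∏ s, x (t s) =
      #(typeWords d b) * ∏ l, x l ^ b l := by
    intro b
    rw [sum_congr rfl fun t ht => prod_of_mem_typeWords x ht, sum_const, nsmul_eq_mul]
  have htot : (∑ l, x l) ^ d = ∑ t : Fin d → K, ∏ s, x (t s) := by
    rw [← Fintype.piFinset_univ, ← prod_univ_sum]; simp
  have hdisj : Set.PairwiseDisjoint ((univ : Finset K).offDiag : Set (K × K))
      fun z => typeWords d (shiftUnit a z.1 z.2) := by
    intro z hz z' hz' hne
    apply typeWords_disjoint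
    intro h
    simp only [coe_offDiag, Set.mem_offDiag] at hz hz'
    obtain ⟨h1, h2⟩ := shiftUnit_inj ha hz.2.2 h
    exact hne (Prod.ext h1 h2)
  have hdisj2 : Disjoint (typeWords d a) ((univ : Finset K).offDiag.biUnion
      fun z => typeWords d (shiftUnit a z.1 z.2)) := by
    rw [Finset.disjoint_biUnion_right]
    intro z hz
    exact typeWords_disjoint (shiftUnit_ne (mem_offDiag.1 hz).2.2).symm
  have hge : #(typeWords d a) * (∏ l, x l ^ a l) + ∑ z ∈ (univ : Finset K).offDiag,
      #(typeWords d (shiftUnit a z.1 z.2)) * (∏ l, x l ^ shiftUnit a z.1 z.2 l) ≤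
      (∑ l, x l) ^ d := by
    have hz : ∑ z ∈ (univ : Finset K).offDiag, (#(typeWords d (shiftUnit a z.1 z.2)) : ℝ) *
        (∏ l, x l ^ shiftUnit a z.1 z.2 l) = ∑ z ∈ (univ : Finset K).offDiag,
        ∑ t ∈ typeWords d (shiftUnit a z.1 z.2), ∏ s, x (t s) :=
      sum_congr rfl fun z _ => (hsum _).symm
    rw [htot, ← hsum a, hz, ← sum_biUnion hdisj, ← sum_union hdisj2]
    exact sum_le_sum_of_subset_of_nonneg (subset_univ _)
      fun t _ _ => prod_nonneg fun s _ => (hx _).le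
  refine le_trans ?_ hge
  rw [mul_add, mul_one, mul_sum]
  refine add_le_add le_rfl (sum_le_sum fun z hz => ?_)
  have hz' := (mem_offDiag.1 hz).2.2
  have h1 := prod_shiftUnit ha x z.1 z.2
  have h2 : (#(typeWords d a) : ℝ) * a z.2 ≤
      #(typeWords d (shiftUnit a z.1 z.2)) * (a z.1 + 1) := by
    exact_mod_cast card_typeWords_shiftUnit (d := d) a hz'
  have hx1 := hx z.1
  have hx2 := hx z.2
  have hp : 0 < ∏ l, x l ^ a l := prod_pos fun l _ => pow_pos (hx l) _
  rw [← mul_div_assoc, div_le_iff₀ (by positivity)]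
  calc (#(typeWords d a) : ℝ) * (∏ l, x l ^ a l) * (a z.2 * x z.1)
      = (#(typeWords d a) * a z.2) * ((∏ l, x l ^ a l) * x z.1) := by ring
    _ ≤ (#(typeWords d (shiftUnit a z.1 z.2)) * (a z.1 + 1)) * ((∏ l, x l ^ a l) * x z.1) := by
        gcongr
    _ = _ := by rw [← h1]; ring

/-- The most likely value of a multinomial with all means at least `1` has small probability. -/
theorem card_typeWords_mode_le (a : K → ℕ) (ha : ∀ i, 0 < a i) (hd : ∑ i, a i = d) :
    #(typeWords d a) * (∏ l, (a l : ℝ) ^ a l) *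
      (1 + ((Fintype.card K : ℝ) * Fintype.card K - Fintype.card K) / 2) ≤ (d : ℝ) ^ d := by
  have h := card_typeWords_mul_le (d := d) a ha (fun i => (a i : ℝ))
    (fun i => by exact_mod_cast ha i)
  rw [show ∑ l, (a l : ℝ) = d by exact_mod_cast hd] at h
  refine le_trans ?_ h
  gcongr
  have h1 : ∑ z ∈ (univ : Finset K).offDiag, (1 / 2 : ℝ) =
      ((Fintype.card K : ℝ) * Fintype.card K - Fintype.card K) / 2 := by
    rw [sum_const, offDiag_card, card_univ, nsmul_eq_mul, Nat.cast_sub (Nat.le_mul_self _)]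
    push_cast; ring
  rw [← h1]
  refine sum_le_sum fun z hz => ?_
  have p1 : (1 : ℝ) ≤ a z.1 := by exact_mod_cast ha z.1
  have p2 : (1 : ℝ) ≤ a z.2 := by exact_mod_cast ha z.2
  rw [div_le_div_iff₀ (by positivity) (by positivity)]
  nlinarith [mul_nonneg (sub_nonneg.2 p1) (sub_nonneg.2 p2)]

/-- The uniform multinomial gives small probability to any value with positive coordinates. -/
theorem card_typeWords_uniform_le (a : K → ℕ) (ha : ∀ i, 0 < a i) :
    #(typeWords d a) *
      (1 + ((Fintype.card K : ℝ) * Fintype.card K - Fintype.card K) / 2) ≤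
      (Fintype.card K : ℝ) ^ d := by
  have h := card_typeWords_mul_le (d := d) a ha (fun _ => (1 : ℝ)) (fun i => one_pos)
  simp only [one_pow, prod_const_one, mul_one, sum_const, card_univ, nsmul_eq_mul] at h
  refine le_trans ?_ h
  gcongr
  set S := ∑ z ∈ (univ : Finset K).offDiag, (a z.2 : ℝ) / (a z.1 + 1)
  have hswap : S = ∑ z ∈ (univ : Finset K).offDiag, (a z.1 : ℝ) / (a z.2 + 1) := by
    apply sum_nbij' Prod.swap Prod.swap <;> simp [eq_comm]
  have h1 : ∑ z ∈ (univ : Finset K).offDiag, (1 : ℝ) =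
      ((Fintype.card K : ℝ) * Fintype.card K - Fintype.card K) := by
    rw [sum_const, offDiag_card, card_univ, nsmul_eq_mul, Nat.cast_sub (Nat.le_mul_self _)]
    push_cast; ring
  rw [← h1]
  have h2 : ∑ z ∈ (univ : Finset K).offDiag, (1 : ℝ) ≤ S + S := by
    conv_rhs => rw [hswap]
    conv_rhs => arg 1; rw [← hswap]
    rw [← sum_add_distrib]
    refine sum_le_sum fun z hz => ?_
    have p1 : (1 : ℝ) ≤ a z.1 := by exact_mod_cast ha z.1
    have p2 : (1 : ℝ) ≤ a z.2 := by exact_mod_cast ha z.2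
    rw [div_add_div _ _ (by positivity) (by positivity), le_div_iff₀ (by positivity)]
    nlinarith [mul_nonneg (sub_nonneg.2 p1) (sub_nonneg.2 p2), sq_nonneg ((a z.1 : ℝ) - a z.2)]
  linarith

end

/-! ### The exponential rate -/

/-- Ratio test for `∏ (n a z)! / (n ∑ a)!`, which replaces Stirling's formula. -/
theorem exists_prod_factorial_le {Z : Type} [Fintype Z] (a : Z → ℕ) (s : ℕ) (hs : ∑ z, a z = s)
    (ha : ∀ z, 0 < a z) (hs0 : 0 < s) :
    ∃ C : ℝ, 0 < C ∧ ∀ n : ℕ, 1 ≤ n → ((∏ z, (n * a z).factorial : ℕ) : ℝ) ≤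
      C * ((∏ z, (a z : ℝ) ^ a z) / (s : ℝ) ^ s) ^ n * (n : ℝ) ^ s * ((n * s).factorial : ℝ) := by
  set R : ℝ := (∏ z, (a z : ℝ) ^ a z) / (s : ℝ) ^ s with hR
  have hspos : (0 : ℝ) < s := by exact_mod_cast hs0
  have hprod : 0 < ∏ z, (a z : ℝ) ^ a z :=
    prod_pos fun z _ => pow_pos (by exact_mod_cast ha z) _
  have hRpos : 0 < R := by positivity
  refine ⟨(∏ z, (a z).factorial : ℕ) / R, ?_, ?_⟩
  · have : 0 < ∏ z, (a z).factorial := prod_pos fun z _ => Nat.factorial_pos _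
    have : (0 : ℝ) < (∏ z, (a z).factorial : ℕ) := by exact_mod_cast this
    positivity
  intro n hn
  induction n, hn using Nat.le_induction with
  | base =>
    have : (1 : ℝ) ≤ (s.factorial : ℝ) := by exact_mod_cast Nat.factorial_pos s
    simp only [one_mul, pow_one, Nat.cast_one, one_pow, mul_one]
    rw [div_mul_cancel₀ _ hRpos.ne']
    exact le_mul_of_one_le_right (by positivity) this
  | succ n hn ih =>
    set C : ℝ := (∏ z, (a z).factorial : ℕ) / R
    have hn0 : (0 : ℝ) < n := by exact_mod_cast hn
    have hup : (∏ z, ((n + 1) * a z).factorial : ℕ) ≤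
        (∏ z, (n * a z).factorial) * ((n + 1) ^ s * ∏ z, a z ^ a z) := by
      rw [← hs, ← prod_pow_eq_pow_sum, ← prod_mul_distrib, ← prod_mul_distrib]
      apply prod_le_prod' fun z _ => ?_
      rw [add_mul, one_mul, ← Nat.factorial_mul_ascFactorial, ← mul_pow]
      apply Nat.mul_le_mul_left
      refine (Nat.ascFactorial_le_pow_add _ _).trans (le_of_eq ?_)
      ring
    have hlow : (n * s).factorial * (n * s) ^ s ≤ ((n + 1) * s).factorial := by
      rw [add_mul, one_mul]
      refine le_trans ?_ (Nat.factorial_mul_pow_le_factorial)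
      gcongr
      omega
    have hup' : ((∏ z, ((n + 1) * a z).factorial : ℕ) : ℝ) ≤
        ((∏ z, (n * a z).factorial : ℕ) : ℝ) * (((n : ℝ) + 1) ^ s * ∏ z, (a z : ℝ) ^ a z) := by
      exact_mod_cast hup
    have hlow' : ((n * s).factorial : ℝ) * ((n : ℝ) * s) ^ s ≤ (((n + 1) * s).factorial : ℝ) := by
      exact_mod_cast hlow
    have hC : 0 ≤ C := by positivity
    calc ((∏ z, ((n + 1) * a z).factorial : ℕ) : ℝ)
        ≤ (C * R ^ n * (n : ℝ) ^ s * ((n * s).factorial : ℝ)) *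
          (((n : ℝ) + 1) ^ s * ∏ z, (a z : ℝ) ^ a z) := hup'.trans (by gcongr)
      _ = C * R ^ (n + 1) * ((n : ℝ) + 1) ^ s * (((n * s).factorial : ℝ) * ((n : ℝ) * s) ^ s) := by
          have : ∏ z, (a z : ℝ) ^ a z = R * (s : ℝ) ^ s := by
            rw [hR, div_mul_cancel₀]; positivity
          rw [this, mul_pow, pow_succ]
          ring
      _ ≤ C * R ^ (n + 1) * ((n : ℝ) + 1) ^ s * (((n + 1) * s).factorial : ℝ) := by gcongr
      _ = _ := by push_cast; ring

/-- The exponential growth rate of the squared expected number of compatible partitions is less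
than one; this is where `3 ≤ k` enters, through `k < 1 + k (k - 1) / 2`. -/
theorem rate_lt_one (k d : ℕ) (hk : 3 ≤ k) (a : Fin k → Fin k → ℕ) (hpos : ∀ i j, 0 < a i j)
    (hrow : ∀ i, ∑ j, a i j = d) :
    (k : ℝ) ^ (2 * k) * (∏ i, (#(typeWords d (a i)) : ℝ)) ^ 2 *
      ((∏ z : Fin k × Fin k, (a z.1 z.2 : ℝ) ^ a z.1 z.2) /
        ((k * d : ℕ) : ℝ) ^ (k * d)) < 1 := by
  have hk3 : (3 : ℝ) ≤ k := by exact_mod_cast hk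
  have hd : 0 < d := by
    rw [← hrow ⟨0, by omega⟩]
    exact sum_pos (fun j _ => hpos _ j) ⟨⟨0, by omega⟩, mem_univ _⟩
  have hd0 : (0 : ℝ) < d := by exact_mod_cast hd
  set L : ℝ := 1 + ((k : ℝ) * k - k) / 2 with hL
  have hkL : (k : ℝ) < L := by rw [hL]; nlinarith
  have hL0 : 0 < L := by linarith
  have hfac : (k : ℝ) ^ (2 * k) * (∏ i, (#(typeWords d (a i)) : ℝ)) ^ 2 *
      ((∏ z : Fin k × Fin k, (a z.1 z.2 : ℝ) ^ a z.1 z.2) / ((k * d : ℕ) : ℝ) ^ (k * d)) =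
      ∏ i, ((k : ℝ) ^ 2 * (#(typeWords d (a i)) : ℝ) ^ 2 * (∏ j, (a i j : ℝ) ^ a i j) /
        ((k : ℝ) ^ d * (d : ℝ) ^ d)) := by
    rw [Fintype.prod_prod_type, prod_div_distrib, prod_mul_distrib, prod_mul_distrib, prod_pow]
    simp only [prod_const, card_univ, Fintype.card_fin]
    push_cast
    rw [← mul_pow, ← pow_mul, ← pow_mul, mul_comm d k, mul_comm k 2, mul_div_assoc, prod_pow]
  rw [hfac]
  have hterm : ∀ i, (k : ℝ) ^ 2 * (#(typeWords d (a i)) : ℝ) ^ 2 * (∏ j, (a i j : ℝ) ^ a i j) /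
      ((k : ℝ) ^ d * (d : ℝ) ^ d) ≤ (k / L) ^ 2 := by
    intro i
    have h1 := card_typeWords_mode_le (d := d) (a i) (hpos i) (hrow i)
    have h2 := card_typeWords_uniform_le (d := d) (a i) (hpos i)
    rw [Fintype.card_fin, ← hL] at h1 h2
    rw [div_pow, div_le_div_iff₀ (by positivity) (by positivity)]
    set w : ℝ := (#(typeWords d (a i)) : ℝ)
    set A : ℝ := ∏ j, (a i j : ℝ) ^ a i j
    have hA : 0 ≤ A := by positivity
    have hw : 0 ≤ w := by positivity
    calc (k : ℝ) ^ 2 * w ^ 2 * A * L ^ 2 = (k : ℝ) ^ 2 * ((w * L) * (w * A * L)) := by ring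
      _ ≤ (k : ℝ) ^ 2 * ((k : ℝ) ^ d * (d : ℝ) ^ d) := by gcongr
  have hq : ((k : ℝ) / L) ^ 2 < 1 := by
    have : (k : ℝ) / L < 1 := by rw [div_lt_one (by linarith)]; exact hkL
    have : 0 ≤ (k : ℝ) / L := by positivity
    nlinarith
  calc _ ≤ ∏ _i : Fin k, ((k : ℝ) / L) ^ 2 :=
        prod_le_prod (fun i _ => by positivity) fun i _ => hterm i
    _ = (((k : ℝ) / L) ^ 2) ^ k := by simp
    _ < 1 := pow_lt_one₀ (by positivity) hq (by omega)

/-! ### Nondegeneracy of the block model -/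

/-- For even `n ≥ 2 d` some graph is compatible with some equipartition: index the vertices of each
cluster by residues modulo `n` and join `(i, x)` to `(j, y)` when `x + y` is one of the residues
`1, 3, …, 2 a i j - 1`.  Parity of `x + y` excludes loops. -/
theorem exists_compat (k d : ℕ) (a : Fin k → Fin k → ℕ) (hsym : ∀ i j, a i j = a j i)
    (hrow : ∀ i, ∑ j, a i j = d) (n : ℕ) (hn : Even n) (hnd : 2 * d ≤ n) (hn0 : 0 < n) :
    ∃ p G, IsEquiPartition k n p ∧ Compat k n a p G := by
  have hle : ∀ i j, a i j ≤ d := fun i j => by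
    rw [← hrow i]; exact single_le_sum (f := fun j => a i j) (fun _ _ => Nat.zero_le _) (mem_univ j)
  let e : Fin k × Fin n ≃ Fin (k * n) := finProdFinEquiv
  let p : Fin (k * n) → Fin k := fun v => (e.symm v).1
  let x : Fin (k * n) → ℕ := fun v => (e.symm v).2
  let G : SimpleGraph (Fin (k * n)) :=
    { Adj := fun u v => ∃ s < a (p u) (p v), (x u + x v) % n = 2 * s + 1
      symm := ⟨by
        rintro u v ⟨s, hs, h⟩
        exact ⟨s, by rwa [hsym], by rwa [add_comm]⟩⟩
      loopless := ⟨by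
        rintro u ⟨s, -, h⟩
        have h1 := Nat.mod_mod_of_dvd (x u + x u) hn.two_dvd
        omega⟩ }
  refine ⟨p, G, fun i => ?_, fun v j => ?_⟩
  · have : p ⁻¹' {i} = Set.range fun y : Fin n => e (i, y) := by
      ext v
      simp only [Set.mem_preimage, Set.mem_singleton_iff, Set.mem_range]
      constructor
      · rintro rfl; exact ⟨(e.symm v).2, by simp [p]⟩
      · rintro ⟨y, rfl⟩; simp [p]
    rw [this, ← Set.image_univ, Set.ncard_image_of_injective _
      (fun y y' h => (Prod.mk.inj (e.injective h)).2), Set.ncard_univ, Nat.card_fin]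
  · have hx : x v < n := (e.symm v).2.2
    have ha : 2 * a (p v) j ≤ n := by have := hle (p v) j; omega
    let f : ℕ → Fin (k * n) := fun s => e (j, ⟨(2 * s + 1 + (n - x v)) % n, Nat.mod_lt _ hn0⟩)
    have hset : p ⁻¹' {j} ∩ G.neighborSet v = f '' Set.Iio (a (p v) j) := by
      ext w
      simp only [Set.mem_inter_iff, Set.mem_preimage, Set.mem_singleton_iff,
        SimpleGraph.mem_neighborSet, Set.mem_image, Set.mem_Iio]
      constructor
      · rintro ⟨rfl, s, hs, h⟩
        refine ⟨s, hs, ?_⟩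
        have hw : x w < n := (e.symm w).2.2
        have : (2 * s + 1 + (n - x v)) % n = x w := by
          rw [← h, Nat.mod_add_mod, show x v + x w + (n - x v) = x w + n by omega,
            Nat.add_mod_right, Nat.mod_eq_of_lt hw]
        rw [← e.apply_symm_apply w]
        simp only [f]
        congr 1
        refine Prod.ext (by simp [p]) (Fin.ext ?_)
        simpa [x] using this
      · rintro ⟨s, hs, rfl⟩
        refine ⟨by simp [p, f], s, by simpa [p, f] using hs, ?_⟩
        have : x (f s) = (2 * s + 1 + (n - x v)) % n := by simp [x, f]
        rw [this, Nat.add_mod_mod, show x v + (2 * s + 1 + (n - x v)) = 2 * s + 1 + n by omega,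
          Nat.add_mod_right, Nat.mod_eq_of_lt (by omega)]
    rw [degIn, hset, Set.InjOn.ncard_image]
    · rw [Set.ncard_eq_toFinset_card']; simp
    · intro s hs s' hs' h
      simp only [Set.mem_Iio] at hs hs'
      have h1 := congrArg Fin.val (Prod.mk.inj (e.injective h)).2
      simp only at h1
      have h2 : 2 * s + 1 ≡ 2 * s' + 1 [MOD n] := Nat.ModEq.add_right_cancel' (n - x v) h1
      have h3 := Nat.ModEq.eq_of_lt_of_lt h2 (by omega) (by omega)
      omega

/-! ### The first-moment bound and the total variation distance -/

section
variable {k d n : ℕ} {a : Fin k → Fin k → ℕ}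

theorem Compat.regular (hrow : ∀ i, ∑ j, a i j = d) {p : Fin (k * n) → Fin k}
    {G : SimpleGraph (Fin (k * n))} (h : Compat k n a p G) (v : Fin (k * n)) :
    (G.neighborSet v).ncard = d := by
  classical
  rw [← hrow (p v), Set.ncard_eq_toFinset_card']
  rw [card_eq_sum_card_fiberwise (f := p) (t := univ) (fun _ _ => mem_univ _)]
  apply sum_congr rfl
  intro j _
  rw [← h v j, degIn, Set.ncard_eq_toFinset_card']
  congr 1
  ext u
  simp [and_comm]

/-- The graphs admitting a compatible equipartition, that is, the support of the block model. -/
def plantable (k n : ℕ) (a : Fin k → Fin k → ℕ) : Set (SimpleGraph (Fin (k * n))) :=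
  {G | ∃ p, IsEquiPartition k n p ∧ Compat k n a p G}

open Classical in
/-- First-moment bound: there are at most `k ^ (k n)` equipartitions, each compatible with a
controlled number of graphs. -/
theorem card_plantable_sq_le (hrow : ∀ i, ∑ j, a i j = d) :
    (d.factorial ^ (k * n) * #(univ.filter fun G => G ∈ plantable k n a)) ^ 2 ≤
      ((k ^ (k * n)) ^ 2 * (∏ i, #(typeWords d (a i)) ^ n) ^ 2) *
        ∏ z : Fin k × Fin k, (n * a z.1 z.2).factorial := by
  set Q := (∏ i, #(typeWords d (a i)) ^ n) ^ 2 * ∏ z : Fin k × Fin k, (n * a z.1 z.2).factorial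
    with hQ
  have key : ∀ p : Fin (k * n) → Fin k, IsEquiPartition k n p →
      d.factorial ^ (k * n) * #(univ.filter fun G => Compat k n a p G) ≤ Nat.sqrt Q := by
    intro p hp
    have h1 := card_graphs_le (d := d) p (fun v j => a (p v) j)
      (univ.filter fun G => Compat k n a p G) (fun G hG => by
        rw [mem_filter] at hG
        exact ⟨hG.2.regular hrow, hG.2⟩)
    rw [Fintype.card_fin] at h1
    refine h1.trans ?_
    rw [Nat.le_sqrt']
    have h2 := card_typed_matchings_sq_le (d := d) a n p (fun i => by
      refine Eq.trans ?_ (hp i)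
      rw [Set.ncard_eq_toFinset_card']
      congr 1
      ext v
      simp)
    convert h2
  have hsub : (univ.filter fun G => G ∈ plantable k n a) ⊆
      (univ.filter fun p => IsEquiPartition k n p).biUnion
        fun p => univ.filter fun G => Compat k n a p G := by
    intro G hG
    obtain ⟨p, hp, hG⟩ := (mem_filter.1 hG).2
    exact mem_biUnion.2 ⟨p, by simpa using hp, by simpa using hG⟩
  have hsum : d.factorial ^ (k * n) * #(univ.filter fun G => G ∈ plantable k n a) ≤
      k ^ (k * n) * Nat.sqrt Q := by
    calc _ ≤ d.factorial ^ (k * n) * ∑ p ∈ univ.filter fun p => IsEquiPartition k n p,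
          #(univ.filter fun G => Compat k n a p G) :=
          Nat.mul_le_mul_left _ ((card_le_card hsub).trans card_biUnion_le)
      _ ≤ #(univ.filter fun p => IsEquiPartition k n p) * Nat.sqrt Q := by
          rw [mul_sum]
          exact sum_le_card_nsmul _ _ _ fun p hp => key p (mem_filter.1 hp).2
      _ ≤ _ := by
          apply Nat.mul_le_mul_right
          refine (card_filter_le _ _).trans (le_of_eq ?_)
          simp
  calc _ ≤ (k ^ (k * n) * Nat.sqrt Q) ^ 2 := Nat.pow_le_pow_left hsum 2
    _ = (k ^ (k * n)) ^ 2 * Nat.sqrt Q ^ 2 := mul_pow _ _ _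
    _ ≤ (k ^ (k * n)) ^ 2 * Q := Nat.mul_le_mul_left _ (Nat.sqrt_le' Q)
    _ = _ := by rw [hQ, mul_assoc]

open Classical in
/-- Lower bound, up to a polynomial factor, for the number of `d`-regular graphs. -/
theorem factorial_le_card_regular (m d : ℕ) (he : Even (m * d))
    (hN : 4 * d + 4 * d * d + 8 * d * (d + 1) + 5 ≤ m * d) :
    (m * d).factorial ≤ m * d * (2 * (m * d) ^ (16 * d * (d + 1)) * (d.factorial ^ m *
      #(univ.filter fun G : SimpleGraph (Fin m) => ∀ v, (G.neighborSet v).ncard = d))) ^ 2 := by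
  have hc : Fintype.card (Fin m × Fin d) = m * d := by simp
  have h1 := factorial_le_card_matchings_sq (Fin m × Fin d) (hc ▸ he) (by omega)
  have h2 := card_matchings_le_simple (Prod.fst : Fin m × Fin d → Fin m) d
    (fun x => by
      refine (card_le_card_of_injOn (t := univ) Prod.snd (fun _ _ => mem_univ _) ?_).trans
        (le_of_eq (by simp))
      rintro ⟨u, i⟩ hu ⟨v, j⟩ hv hij
      simp only [coe_filter, mem_univ, true_and, Set.mem_ofPred_eq] at hu hv hij
      rw [hu, hv, hij]) (by omega)
  have h3 := card_simple_le (V := Fin m) (d := d)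
  rw [hc] at h1 h2
  rw [Fintype.card_fin] at h3
  refine h1.trans (Nat.mul_le_mul_left _ (Nat.pow_le_pow_left (h2.trans ?_) 2))
  exact Nat.mul_le_mul_left _ (by convert h3)

/-- The support of the block model is exponentially small among the regular graphs. -/
theorem exists_uniform_plantable_sq_le (hk : 3 ≤ k) (hpos : ∀ i j, 0 < a i j)
    (hrow : ∀ i, ∑ j, a i j = d) :
    ∃ C ρ : ℝ, ∃ t : ℕ, |ρ| < 1 ∧ ∀ n : ℕ, Even n →
      4 * d + 4 * d * d + 8 * d * (d + 1) + 5 ≤ n →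
      uniformRegularLaw (k * n) d (plantable k n a) ^ 2 ≤ C * ((n : ℝ) ^ t * ρ ^ n) := by
  classical
  have hd : 0 < d := by
    rw [← hrow ⟨0, by omega⟩]
    exact sum_pos (fun j _ => hpos _ j) ⟨⟨0, by omega⟩, mem_univ _⟩
  have hs0 : 0 < k * d := Nat.mul_pos (by omega) hd
  obtain ⟨C, hC, hfac⟩ := exists_prod_factorial_le
    (fun z : Fin k × Fin k => a z.1 z.2) (k * d)
    (by rw [Fintype.sum_prod_type]; simp [hrow]) (fun z => hpos _ _) hs0
  have hrate := rate_lt_one k d hk a hpos hrow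
  set w : ℝ := ∏ i, (#(typeWords d (a i)) : ℝ) with hw
  set r : ℝ := (∏ z : Fin k × Fin k, (a z.1 z.2 : ℝ) ^ a z.1 z.2) /
    ((k * d : ℕ) : ℝ) ^ (k * d) with hr
  set e := 16 * d * (d + 1) with he
  have hw0 : 0 ≤ w := prod_nonneg fun i _ => Nat.cast_nonneg _
  have hr0 : 0 ≤ r := div_nonneg (prod_nonneg fun z _ => pow_nonneg (Nat.cast_nonneg _) _)
    (pow_nonneg (Nat.cast_nonneg _) _)
  clear_value w r e
  refine ⟨4 * ((k * d : ℕ) : ℝ) ^ (2 * e + 1) * C, (k : ℝ) ^ (2 * k) * w ^ 2 * r,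
    2 * e + 1 + k * d, ?_, fun n hn hnN => ?_⟩
  · rwa [abs_of_nonneg (mul_nonneg (by positivity) hr0)]
  have hmn : k * n * d = n * (k * d) := by ring
  have hX := card_plantable_sq_le (n := n) hrow
  have hR := factorial_le_card_regular (k * n) d (by rw [hmn]; exact hn.mul_right _)
    (hnN.trans (by rw [hmn]; exact Nat.le_mul_of_pos_right _ hs0))
  have hZ := hfac n (by omega)
  rw [hmn] at hR
  rw [← he] at hR
  set D := d.factorial ^ (k * n)
  set X := #(univ.filter fun G => G ∈ plantable k n a)
  set Rg := #(univ.filter fun G : SimpleGraph (Fin (k * n)) => ∀ v, (G.neighborSet v).ncard = d)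
    with hRg
  have hlaw : uniformRegularLaw (k * n) d (plantable k n a) ≤ (X : ℝ) / Rg := by
    rw [uniformRegularLaw, Set.ncard_eq_toFinset_card', Set.ncard_eq_toFinset_card']
    have e1 : #({G : SimpleGraph (Fin (k * n)) | ∀ v, (G.neighborSet v).ncard = d}).toFinset =
        Rg := by
      rw [hRg]; congr 1; ext G; simp
    rw [e1]
    gcongr
    refine card_le_card fun G hG => ?_
    simp only [Set.mem_toFinset, Set.mem_ofPred_eq] at hG
    simpa using hG.2
  have hlaw0 : 0 ≤ uniformRegularLaw (k * n) d (plantable k n a) := by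
    unfold uniformRegularLaw; positivity
  have hRD : 0 < D * Rg := by
    rcases Nat.eq_zero_or_pos (D * Rg) with h | h
    · rw [h] at hR
      have := Nat.factorial_pos (n * (k * d))
      simp at hR
      omega
    · exact h
  have hD : 0 < D := Nat.pos_of_mul_pos_right hRD
  have hD' : (0 : ℝ) < D := by exact_mod_cast hD
  have hRD' : (0 : ℝ) < D * Rg := by exact_mod_cast hRD
  have hX' : ((D : ℝ) * X) ^ 2 ≤ (((k : ℝ) ^ (2 * k) * w ^ 2) ^ n) *
      ((∏ z : Fin k × Fin k, (n * a z.1 z.2).factorial : ℕ) : ℝ) := by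
    have := (Nat.cast_le (α := ℝ)).2 hX
    push_cast at this ⊢
    refine this.trans (le_of_eq ?_)
    congr 1
    rw [hw, prod_pow, mul_pow, ← pow_mul, ← pow_mul, ← pow_mul, ← pow_mul, mul_comm n 2]
    congr 2
    ring
  have hR' : ((n * (k * d)).factorial : ℝ) ≤ ((n : ℝ) * (k * d : ℕ)) *
      (2 * ((n : ℝ) * (k * d : ℕ)) ^ e * (D * Rg)) ^ 2 := by exact_mod_cast hR
  have hn0 : (0 : ℝ) < n := by exact_mod_cast (show 0 < n by omega)
  have hs : (0 : ℝ) < (k * d : ℕ) := by exact_mod_cast hs0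
  calc uniformRegularLaw (k * n) d (plantable k n a) ^ 2
      ≤ ((X : ℝ) / Rg) ^ 2 := pow_le_pow_left₀ hlaw0 hlaw 2
    _ = (D * X) ^ 2 / (D * Rg) ^ 2 := by
        rw [← div_pow, mul_div_mul_left _ _ hD'.ne']
    _ ≤ _ := by
        rw [div_le_iff₀ (by positivity)]
        calc ((D : ℝ) * X) ^ 2
            ≤ (((k : ℝ) ^ (2 * k) * w ^ 2) ^ n) * (C * r ^ n * (n : ℝ) ^ (k * d) *
              (((n : ℝ) * (k * d : ℕ)) * (2 * ((n : ℝ) * (k * d : ℕ)) ^ e * (D * Rg)) ^ 2)) := by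
              refine hX'.trans ?_
              gcongr
              refine hZ.trans ?_
              gcongr
          _ = _ := by
              rw [mul_pow ((k : ℝ) ^ (2 * k) * w ^ 2) r n]
              generalize ((k : ℝ) ^ (2 * k) * w ^ 2) ^ n = u
              generalize ((k * d : ℕ) : ℝ) = s
              generalize (D : ℝ) * Rg = y
              generalize r ^ n = q
              ring

theorem uniformRegularLaw_mem_Icc (m d : ℕ) (E : Set (SimpleGraph (Fin m))) :
    0 ≤ uniformRegularLaw m d E ∧ uniformRegularLaw m d E ≤ 1 := by
  unfold uniformRegularLaw
  refine ⟨by positivity, div_le_one_of_le₀ ?_ (by positivity)⟩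
  exact_mod_cast Set.ncard_le_ncard (fun G (hG : _ ∧ _) => hG.1) (Set.toFinite _)

theorem rsbmLaw_mem_Icc (E : Set (SimpleGraph (Fin (k * n)))) :
    0 ≤ rsbmLaw k n a E ∧ rsbmLaw k n a E ≤ 1 := by
  unfold rsbmLaw rsbmP
  refine ⟨by positivity, div_le_one_of_le₀ ?_ (by positivity)⟩
  exact_mod_cast Set.ncard_le_ncard (fun G (hG : _ ∧ _ ∧ _) => And.intro hG.1 hG.2.1) (Set.toFinite _)

theorem rsbmLaw_plantable (h : ∃ p G, IsEquiPartition k n p ∧ Compat k n a p G) :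
    rsbmLaw k n a (plantable k n a) = 1 := by
  unfold rsbmLaw rsbmP
  have heq : {pg : (Fin (k * n) → Fin k) × SimpleGraph (Fin (k * n)) | IsEquiPartition k n pg.1 ∧
      Compat k n a pg.1 pg.2 ∧ pg.2 ∈ plantable k n a} = {pg | IsEquiPartition k n pg.1 ∧
      Compat k n a pg.1 pg.2} := by
    ext pg
    exact ⟨fun h => ⟨h.1, h.2.1⟩, fun h => ⟨h.1, h.2, pg.1, h.1, h.2⟩⟩
  rw [heq]
  obtain ⟨p, G, hp, hG⟩ := h
  apply div_self
  have : 0 < ({pg : (Fin (k * n) → Fin k) × SimpleGraph (Fin (k * n)) |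
      IsEquiPartition k n pg.1 ∧ Compat k n a pg.1 pg.2}).ncard :=
    (Set.ncard_pos (Set.toFinite _)).2 ⟨(p, G), hp, hG⟩
  exact_mod_cast this.ne'

theorem abs_law_sub_le_one (E : Set (SimpleGraph (Fin (k * n)))) :
    |rsbmLaw k n a E - uniformRegularLaw (k * n) d E| ≤ 1 := by
  have h1 := rsbmLaw_mem_Icc (a := a) E
  have h2 := uniformRegularLaw_mem_Icc (k * n) d E
  rw [abs_le]
  constructor <;> linarith

theorem tvDist_le_one : tvDist (rsbmLaw k n a) (uniformRegularLaw (k * n) d) ≤ 1 :=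
  ciSup_le abs_law_sub_le_one

theorem le_tvDist (h : ∃ p G, IsEquiPartition k n p ∧ Compat k n a p G) :
    1 - uniformRegularLaw (k * n) d (plantable k n a) ≤
      tvDist (rsbmLaw k n a) (uniformRegularLaw (k * n) d) := by
  rw [← rsbmLaw_plantable h]
  refine (le_abs_self _).trans
    (le_ciSup (f := fun E => |rsbmLaw k n a E - uniformRegularLaw (k * n) d E|) ?_ _)
  exact ⟨1, by rintro _ ⟨E, rfl⟩; exact abs_law_sub_le_one E⟩

end

end

/-- Theorem 2.1 of the paper.  For `k ≥ 3` and a fixed `k × k` symmetric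
matrix `A = (a i j)` of strictly positive integers with constant row sum `d`, the total
variation distance between the RSBM law `μⁿ_A` and the uniform measure `μ^{kn}_d` on
`d`-regular graphs on `k n` vertices tends to `1` as `n → ∞` (along `n` for which the
model is nondegenerate, i.e. even `n`). -/
theorem rsbm_tv_tendsto_one (k d : ℕ) (hk : 3 ≤ k)
    (a : Fin k → Fin k → ℕ)
    (hpos : ∀ i j, 0 < a i j)
    (hsym : ∀ i j, a i j = a j i)
    (hrow : ∀ i, ∑ j, a i j = d) :
    Tendsto (fun n : ℕ => tvDist (rsbmLaw k n a) (uniformRegularLaw (k * n) d))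
      (atTop ⊓ 𝓟 {n : ℕ | Even n}) (nhds 1) := by
  obtain ⟨C, ρ, t, hρ, hC⟩ := exists_uniform_plantable_sq_le hk hpos hrow
  have hlim : Tendsto (fun n : ℕ => 1 - √(C * ((n : ℝ) ^ t * ρ ^ n))) atTop (nhds 1) := by
    have h0 := (tendsto_pow_const_mul_const_pow_of_abs_lt_one t hρ).const_mul C
    have h1 := (Real.continuous_sqrt.tendsto _).comp h0
    simpa using h1.const_sub 1
  refine tendsto_of_tendsto_of_tendsto_of_le_of_le' (hlim.mono_left inf_le_left)
    tendsto_const_nhds ?_ (Eventually.of_forall fun n => tvDist_le_one)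
  rw [eventually_inf_principal]
  filter_upwards [eventually_ge_atTop (4 * d + 4 * d * d + 8 * d * (d + 1) + 5)] with n hn heven
  refine le_trans ?_ (le_tvDist (exists_compat k d a hsym hrow n heven (by lia) (by lia)))
  have := Real.le_sqrt_of_sq_le (hC n heven hn)
  linarith
end

section
/- Let k ≥ 3 be an integer and let A = (a_{i,j}) be a fixed k×k symmetric matrix of strictly positive integers with ∑_{j=1}^k a_{i,j} = d for every i. Then there is a constant C' > 0 (depending only on k, d and A) such that for all sufficiently large n, the uniform measure on d-regular graphs on kn labeled vertices assigns to the support of the RSBM mass at most μ^{kn}_d(S^n_A) ≤ C' · (k³/(2π)^{k−1})^{kn/2} · n^{(k²−3k+2)/4}; in particular μ^{kn}_d(S^n_A) → 0 as n → ∞. -/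
/-!
The claimed exponential rate has strict slack, so it suffices to count all graphs involved up to
factors polynomial in `n`.

A graph in the support is compatible with at least one of the `k ^ (k n)` assignments of clusters,
and a compatible graph is determined by its blocks, the regular graphs inside the clusters and the
biregular graphs between them. Hence the mass of the support is at most `k ^ (k n)` times the product
of the numbers of blocks, divided by the number of `d`-regular graphs.

Both counts come from the configuration model, built one edge at a time (`liftSum_succ`). For the
blocks, bounding the number of pairs of free half-edges from above gives `card_exactGraphs_le`. For
the regular graphs, at most `d (d + 1)` half-edges are blocked as partners of a given one, which
gives many graphs with all degrees at most `d` and boundedly many missing edges (`le_liftSum`);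
these are completed to regular graphs by switchings, at a polynomial cost (`exists_switch`,
`le_card_regular`).

Up to polynomial factors, the square of the mass is therefore at most `(∏ i, rowRate d (a i)) ^ n`
(`uniformRegularLaw_sq_le`). The strict monotonicity of the Stirling sequence, the entropy bound
`pow_sum_le` and `d ≤ k ∏ j, a i j` show that each row rate is strictly less than
`k ^ 3 / (2 π) ^ (k - 1)` (`rowRate_lt`). The gap absorbs the polynomial factors, and since this
base is less than `1` (`base_lt_one`), the mass tends to `0`.
-/

open Filter

open Finset

/-! ### Degrees and half-edge weights of edge sets -/

/-- The degree of `v` in the edge set `E`. A diagonal pair would count once, but all edge sets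
below are diagonal-free. -/
def edeg {V : Type} [DecidableEq V] (E : Finset (Sym2 V)) (v : V) : ℕ := #{e ∈ E | v ∈ e}

/-- The number of ways of attaching the edges of `E` to distinct labelled half-edges, when vertex
`v` carries `c v` half-edges. It is zero as soon as some degree exceeds its capacity. -/
def lifts {V : Type} [Fintype V] [DecidableEq V] (c : V → ℕ) (E : Finset (Sym2 V)) : ℕ :=
  ∏ v, (c v).descFactorial (edeg E v)

/-- The total number of lifts of the `m`-element subsets of the host edge set `K`, that is, the
number of partial matchings with `m` edges of the half-edges of the configuration model whose
projection is a simple graph inside `K`. -/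
def liftSum {V : Type} [Fintype V] [DecidableEq V] (K : Finset (Sym2 V)) (c : V → ℕ) (m : ℕ) : ℕ :=
  ∑ E ∈ K.powersetCard m, lifts c E

/-- The product of the values of `r` at the two endpoints of `e`: the number of lifts of the single
edge `e` when `r` counts the half-edges still free. -/
def edgeProd {V : Type} (r : V → ℕ) (e : Sym2 V) : ℕ :=
  Sym2.lift ⟨fun u v => r u * r v, fun u v => mul_comm (r u) (r v)⟩ e

/-- All potential edges of a simple graph on `V`. -/
def allEdges (V : Type) [Fintype V] [DecidableEq V] : Finset (Sym2 V) := {e | ¬ e.IsDiag}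

theorem edeg_insert {V : Type} [DecidableEq V] {E : Finset (Sym2 V)} {e : Sym2 V} (he : e ∉ E)
    (v : V) : edeg (insert e E) v = edeg E v + if v ∈ e then 1 else 0 := by
  unfold edeg
  rw [filter_insert]
  split_ifs with h
  · rw [card_insert_of_notMem (by simp [he])]
  · simp

theorem edeg_erase {V : Type} [DecidableEq V] {E : Finset (Sym2 V)} {e : Sym2 V} (he : e ∈ E)
    (v : V) : edeg (E.erase e) v + (if v ∈ e then 1 else 0) = edeg E v := by
  conv_rhs => rw [← insert_erase he]
  rw [edeg_insert (notMem_erase e E)]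

/-- The degree counts the neighbours. -/
theorem edeg_eq_card {V : Type} [Fintype V] [DecidableEq V] (E : Finset (Sym2 V)) (v : V) :
    edeg E v = #{w | s(v, w) ∈ E} := by
  symm
  unfold edeg
  apply card_bij (fun w _ => s(v, w))
  · intro w hw
    simpa using hw
  · intro w _ w' _ h
    exact Sym2.congr_right.1 h
  · intro e he
    obtain ⟨he, hv⟩ := mem_filter.1 he
    obtain ⟨w, rfl⟩ := hv
    exact ⟨w, by simpa using he, rfl⟩

theorem lifts_insert {V : Type} [Fintype V] [DecidableEq V] (c : V → ℕ) {E : Finset (Sym2 V)}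
    {e : Sym2 V} (he : e ∉ E) (hd : ¬ e.IsDiag) :
    lifts c (insert e E) = lifts c E * edgeProd (fun v => c v - edeg E v) e := by
  induction e using Sym2.ind with
  | _ u v =>
    have huv : u ≠ v := by simpa using hd
    have h1 : ∀ w, (c w).descFactorial (edeg (insert s(u, v) E) w) =
        (c w).descFactorial (edeg E w) * if w ∈ s(u, v) then c w - edeg E w else 1 := by
      intro w
      rw [edeg_insert he]
      split_ifs
      · rw [Nat.descFactorial_succ, mul_comm]
      · simp
    have h2 : ({w | w ∈ s(u, v)} : Finset V) = {u, v} := by ext; simp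
    unfold lifts
    rw [prod_congr rfl fun w _ => h1 w, prod_mul_distrib, prod_ite, h2, prod_pair huv]
    simp [edgeProd]

theorem sum_edeg {V : Type} [Fintype V] [DecidableEq V] {E : Finset (Sym2 V)}
    (hE : ∀ e ∈ E, ¬ e.IsDiag) : ∑ v, edeg E v = 2 * #E := by
  induction E using Finset.induction_on with
  | empty => simp [edeg]
  | insert e E he ih =>
    simp_rw [edeg_insert he]
    rw [sum_add_distrib, ih fun e h => hE e (mem_insert_of_mem h), card_insert_of_notMem he]
    have : ∑ v, (if v ∈ e then 1 else 0) = 2 := by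
      have hd := hE e (mem_insert_self _ _)
      clear he hE ih
      induction e using Sym2.ind with
      | _ u v =>
        have huv : u ≠ v := by simpa using hd
        have h2 : ({w | w ∈ s(u, v)} : Finset V) = {u, v} := by ext; simp
        rw [sum_boole, h2, card_pair huv]; rfl
    omega

theorem edeg_le_of_lifts_ne_zero {V : Type} [Fintype V] [DecidableEq V] {c : V → ℕ}
    {E : Finset (Sym2 V)} (h : lifts c E ≠ 0) (v : V) : edeg E v ≤ c v := by
  by_contra! hv
  exact h (prod_eq_zero (mem_univ v) (Nat.descFactorial_eq_zero_iff_lt.2 hv))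

theorem sum_sub_edeg {V : Type} [Fintype V] [DecidableEq V] {c : V → ℕ} {E : Finset (Sym2 V)}
    (hE : ∀ e ∈ E, ¬ e.IsDiag) (h : ∀ v, edeg E v ≤ c v) :
    ∑ v, (c v - edeg E v) = ∑ v, c v - 2 * #E := by
  rw [← sum_edeg hE]
  exact sum_tsub_distrib _ fun v _ => h v

/-- Double counting of the flags `e ∈ E` with `#E = m + 1`, seen as an `m`-element set to which
a new element is added. -/
theorem sum_powersetCard_succ {α : Type} [DecidableEq α] (K : Finset α) (m : ℕ)
    (f : Finset α → ℕ) :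
    (m + 1) * ∑ E ∈ K.powersetCard (m + 1), f E =
      ∑ E ∈ K.powersetCard m, ∑ e ∈ K \ E, f (insert e E) := by
  have h1 : (m + 1) * ∑ E ∈ K.powersetCard (m + 1), f E =
      ∑ E ∈ K.powersetCard (m + 1), ∑ _e ∈ E, f E := by
    rw [mul_sum]
    refine sum_congr rfl fun E hE => ?_
    rw [sum_const, (mem_powersetCard.1 hE).2, smul_eq_mul]
  rw [h1, sum_sigma', sum_sigma']
  refine sum_bij' (fun x _ => ⟨x.1.erase x.2, x.2⟩) (fun x _ => ⟨insert x.2 x.1, x.2⟩)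
    ?_ ?_ ?_ ?_ ?_
  · rintro ⟨E, e⟩ h
    simp only [mem_sigma, mem_powersetCard, Finset.mem_sdiff] at h ⊢
    refine ⟨⟨(erase_subset _ _).trans h.1.1, ?_⟩, h.1.1 h.2, notMem_erase _ _⟩
    rw [card_erase_of_mem h.2, h.1.2]; rfl
  · rintro ⟨E, e⟩ h
    simp only [mem_sigma, mem_powersetCard, Finset.mem_sdiff] at h ⊢
    refine ⟨⟨insert_subset h.2.1 h.1.1, ?_⟩, mem_insert_self _ _⟩
    rw [card_insert_of_notMem h.2.2, h.1.2]
  · rintro ⟨E, e⟩ h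
    simp only [mem_sigma] at h
    simp [insert_erase h.2]
  · rintro ⟨E, e⟩ h
    simp only [mem_sigma, Finset.mem_sdiff] at h
    simp [erase_insert h.2.2]
  · rintro ⟨E, e⟩ h
    simp only [mem_sigma] at h
    simp [insert_erase h.2]

/-- Adding one edge at a time: the number of lifts of `insert e E` is the number of lifts of `E`
times the number of free half-edges at each endpoint of `e`. -/
theorem liftSum_succ {V : Type} [Fintype V] [DecidableEq V] {K : Finset (Sym2 V)}
    (hK : ∀ e ∈ K, ¬ e.IsDiag) (c : V → ℕ) (m : ℕ) :
    (m + 1) * liftSum K c (m + 1) =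
      ∑ E ∈ K.powersetCard m, lifts c E *
        ∑ e ∈ K \ E, edgeProd (fun v => c v - edeg E v) e := by
  unfold liftSum
  rw [sum_powersetCard_succ]
  refine sum_congr rfl fun E _ => ?_
  rw [mul_sum]
  refine sum_congr rfl fun e he => ?_
  obtain ⟨h1, h2⟩ := Finset.mem_sdiff.1 he
  exact lifts_insert c h2 (hK e h1)

/-! ### Upper bound for graphs with prescribed degrees -/

theorem liftSum_succ_le {V : Type} [Fintype V] [DecidableEq V] {K : Finset (Sym2 V)}
    (hK : ∀ e ∈ K, ¬ e.IsDiag) {q : ℕ}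
    (hq : ∀ r : V → ℕ, q * ∑ e ∈ K, edgeProd r e ≤ (∑ v, r v) ^ 2) (c : V → ℕ) (m : ℕ) :
    q * ((m + 1) * liftSum K c (m + 1)) ≤ (∑ v, c v - 2 * m) ^ 2 * liftSum K c m := by
  rw [liftSum_succ hK, liftSum, mul_sum, mul_sum]
  refine sum_le_sum fun E hE => ?_
  obtain ⟨hE, hm⟩ := mem_powersetCard.1 hE
  by_cases h0 : lifts c E = 0
  · simp [h0]
  rw [← hm, ← sum_sub_edeg (fun e he => hK e (hE he)) (edeg_le_of_lifts_ne_zero h0),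
    mul_left_comm, mul_comm (_ ^ 2)]
  refine Nat.mul_le_mul_left _ (le_trans ?_ (hq _))
  gcongr
  exact sdiff_subset

/-- Upper bound for the full matchings. The constant `q` measures how few pairs of
half-edges the host joins: `q = 2` for the complete graph and `q = 4` for a complete bipartite
graph. It follows from the one-step inequality `liftSum_succ_le` by induction
on the number of edges. -/
theorem liftSum_le {V : Type} [Fintype V] [DecidableEq V] {K : Finset (Sym2 V)}
    (hK : ∀ e ∈ K, ¬ e.IsDiag) {q : ℕ}
    (hq : ∀ r : V → ℕ, q * ∑ e ∈ K, edgeProd r e ≤ (∑ v, r v) ^ 2) {c : V → ℕ} {h : ℕ}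
    (hc : ∑ v, c v = 2 * h) : q ^ h * liftSum K c h ≤ 4 ^ h * h.factorial := by
  -- The invariant is `q ^ m * liftSum K c m ≤ 4 ^ m * (h! / (h - m)!) ^ 2 / m!`.
  have key : ∀ m ≤ h, q ^ m * m.factorial * (h - m).factorial ^ 2 * liftSum K c m ≤
      4 ^ m * h.factorial ^ 2 := by
    intro m
    induction m with
    | zero =>
      intro _
      simp [liftSum, lifts, edeg]
    | succ m ih =>
      intro hm
      refine le_trans ?_ (le_trans (Nat.mul_le_mul_left 4 (ih (by omega))) (by
        rw [pow_succ 4, mul_comm (4 ^ m) 4, mul_assoc]))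
      have h1 := liftSum_succ_le hK hq c m
      obtain ⟨s, rfl⟩ : ∃ s, h = m + 1 + s := ⟨h - (m + 1), by omega⟩
      rw [hc, show 2 * (m + 1 + s) - 2 * m = 2 * (s + 1) by omega] at h1
      rw [show m + 1 + s - (m + 1) = s by omega, show m + 1 + s - m = s + 1 by omega,
        Nat.factorial_succ s, Nat.factorial_succ m]
      calc q ^ (m + 1) * ((m + 1) * m.factorial) * s.factorial ^ 2 * liftSum K c (m + 1)
          = q ^ m * m.factorial * s.factorial ^ 2 * (q * ((m + 1) * liftSum K c (m + 1))) := by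
            ring
        _ ≤ q ^ m * m.factorial * s.factorial ^ 2 * ((2 * (s + 1)) ^ 2 * liftSum K c m) := by
            gcongr
        _ = _ := by ring
  have := key h le_rfl
  simp only [Nat.sub_self, Nat.factorial_zero, one_pow, mul_one] at this
  refine Nat.le_of_mul_le_mul_left (?_ : h.factorial * _ ≤ h.factorial * _) (Nat.factorial_pos h)
  calc _ = q ^ h * h.factorial * liftSum K c h := by ring
    _ ≤ _ := this
    _ = _ := by ring

/-- The edge sets inside the host `K` whose degree at each `v` is exactly `c v`. -/
def exactGraphs {V : Type} [Fintype V] [DecidableEq V] (K : Finset (Sym2 V)) (c : V → ℕ) :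
    Finset (Finset (Sym2 V)) :=
  {E ∈ K.powerset | ∀ v, edeg E v = c v}

theorem mem_exactGraphs {V : Type} [Fintype V] [DecidableEq V] {K : Finset (Sym2 V)} {c : V → ℕ}
    {E : Finset (Sym2 V)} : E ∈ exactGraphs K c ↔ E ⊆ K ∧ ∀ v, edeg E v = c v := by
  simp [exactGraphs]

/-- Upper bound for the number of graphs with prescribed degrees: each of them has exactly
`∏ v, (c v)!` lifts. -/
theorem card_exactGraphs_le {V : Type} [Fintype V] [DecidableEq V] {K : Finset (Sym2 V)}
    (hK : ∀ e ∈ K, ¬ e.IsDiag) {q : ℕ}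
    (hq : ∀ r : V → ℕ, q * ∑ e ∈ K, edgeProd r e ≤ (∑ v, r v) ^ 2) {c : V → ℕ} {h : ℕ}
    (hc : ∑ v, c v = 2 * h) :
    q ^ h * (#(exactGraphs K c) * ∏ v, (c v).factorial) ≤
      4 ^ h * h.factorial := by
  refine le_trans (Nat.mul_le_mul_left _ ?_) (liftSum_le hK hq hc)
  rw [← smul_eq_mul, ← sum_const]
  unfold liftSum
  refine le_trans (sum_le_sum (g := fun E => lifts c E) fun E hE => ?_)
    (sum_le_sum_of_subset fun E hE => ?_)
  · have h1 := (mem_exactGraphs.1 hE).2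
    unfold lifts
    refine le_of_eq (prod_congr rfl fun v _ => ?_)
    rw [h1 v, Nat.descFactorial_self]
  · obtain ⟨h2, h1⟩ := mem_exactGraphs.1 hE
    refine mem_powersetCard.2 ⟨h2, ?_⟩
    have := sum_edeg fun e he => hK e (h2 he)
    simp_rw [h1] at this
    omega

/-! ### Many almost perfect matchings in the complete graph -/

theorem two_mul_sum_edgeProd {V : Type} [Fintype V] [DecidableEq V] {F : Finset (Sym2 V)}
    (hF : ∀ e ∈ F, ¬ e.IsDiag) (r : V → ℕ) :
    2 * ∑ e ∈ F, edgeProd r e = ∑ x : V × V with s(x.1, x.2) ∈ F, r x.1 * r x.2 := by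
  rw [← sum_fiberwise_of_maps_to (s := {x : V × V | s(x.1, x.2) ∈ F}) (t := F)
    (g := fun x => s(x.1, x.2)) (by intro x hx; simpa using hx), mul_sum]
  refine sum_congr rfl fun e he => ?_
  have hd := hF e he
  induction e using Sym2.ind with
  | _ u v =>
    have huv : u ≠ v := by simpa using hd
    have : ({x ∈ ({x : V × V | s(x.1, x.2) ∈ F} : Finset (V × V)) | s(x.1, x.2) = s(u, v)} :
        Finset (V × V)) = {(u, v), (v, u)} := by
      ext ⟨x, y⟩
      simp only [mem_filter, mem_univ, true_and, Sym2.eq_iff, mem_insert, mem_singleton,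
        Prod.mk.injEq]
      constructor
      · exact fun h => h.2
      · rintro (⟨rfl, rfl⟩ | ⟨rfl, rfl⟩)
        · exact ⟨he, by simp⟩
        · exact ⟨by rwa [Sym2.eq_swap], by simp⟩
    rw [this, sum_pair (by simp [huv])]
    simp [edgeProd]
    ring

/-- When `E` has maximal degree at most `d`, few pairs of free half-edges are blocked: for each
half-edge at `u`, only those at `u` itself and at its at most `d` neighbours. -/
theorem sq_sum_le_edgeProd {V : Type} [Fintype V] [DecidableEq V] {d : ℕ} {E : Finset (Sym2 V)}
    (h : ∀ v, edeg E v ≤ d) {r : V → ℕ} (hr : ∀ v, r v ≤ d) :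
    (∑ v, r v) ^ 2 ≤ 2 * ∑ e ∈ allEdges V \ E, edgeProd r e + (∑ v, r v) * (d * (d + 1)) := by
  rw [two_mul_sum_edgeProd (by
    intro e he; have := (Finset.mem_sdiff.1 he).1; simpa [allEdges] using this)]
  have h1 : (∑ v, r v) ^ 2 = ∑ x : V × V, r x.1 * r x.2 := by
    rw [sq, sum_mul_sum, ← univ_product_univ, sum_product]
  rw [h1, ← sum_filter_add_sum_filter_not univ (fun x : V × V => s(x.1, x.2) ∈ allEdges V \ E)]
  refine Nat.add_le_add_left ?_ _
  calc ∑ x : V × V with ¬ s(x.1, x.2) ∈ allEdges V \ E, r x.1 * r x.2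
      ≤ ∑ x : V × V with ¬ s(x.1, x.2) ∈ allEdges V \ E, r x.1 * d := by
        gcongr; exact hr _
    _ = ∑ u, r u * (d * #{v | ¬ s(u, v) ∈ allEdges V \ E}) := by
        rw [sum_filter, ← univ_product_univ, sum_product]
        refine sum_congr rfl fun u _ => ?_
        simp only
        rw [← sum_filter, sum_const, smul_eq_mul]
        ring
    _ ≤ ∑ u, r u * (d * (d + 1)) := by
        gcongr with u
        refine le_trans (card_le_card (t := insert u ({w | s(u, w) ∈ E} : Finset V)) ?_)
          ((card_insert_le _ _).trans ?_)
        · intro w hw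
          simp only [allEdges, Finset.mem_sdiff, mem_filter, mem_univ, true_and, Sym2.mk_isDiag_iff,
            not_and, not_not, mem_insert] at hw ⊢
          by_cases huw : u = w
          · exact Or.inl huw.symm
          · exact Or.inr (hw huw)
        · rw [← edeg_eq_card]
          exact Nat.succ_le_succ (h u)
    _ = _ := by rw [sum_mul]

theorem le_liftSum_succ {V : Type} [Fintype V] [DecidableEq V] (d m : ℕ) :
    (Fintype.card V * d - 2 * m) * (Fintype.card V * d - 2 * m - d * (d + 1)) *
      liftSum (allEdges V) (fun _ => d) m ≤
        2 * ((m + 1) * liftSum (allEdges V) (fun _ => d) (m + 1)) := by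
  have hK : ∀ e ∈ allEdges V, ¬ e.IsDiag := by simp [allEdges]
  rw [liftSum_succ hK, liftSum, mul_sum, mul_sum]
  refine sum_le_sum fun E hE => ?_
  obtain ⟨hE, hm⟩ := mem_powersetCard.1 hE
  by_cases h0 : lifts (fun _ => d) E = 0
  · simp [h0]
  have h1 := edeg_le_of_lifts_ne_zero h0
  have h2 := sum_sub_edeg (fun e he => hK e (hE he)) h1
  have h3 := sq_sum_le_edgeProd h1 (r := fun v => d - edeg E v) (fun v => Nat.sub_le _ _)
  rw [h2, hm] at h3
  simp only [sum_const, card_univ, smul_eq_mul] at h3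
  rw [mul_left_comm, mul_comm]
  refine Nat.mul_le_mul_left _ ?_
  rw [Nat.mul_sub, ← sq]
  omega

/-- Lower bound for the almost perfect matchings of the complete graph. Choosing edges one at a
time loses at most `d (d + 1) = 2 δ` half-edges as partners at each step, so the product of the
numbers of choices stays positive until `δ` edges are missing. -/
theorem le_liftSum {V : Type} [Fintype V] [DecidableEq V] {d h δ : ℕ}
    (hh : Fintype.card V * d = 2 * h) (hδ : d * (d + 1) = 2 * δ) (hle : δ ≤ h) :
    2 ^ (h - δ) * h.factorial ≤ δ.factorial * liftSum (allEdges V) (fun _ => d) (h - δ) := by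
  -- The invariant is
  -- `liftSum _ _ m ≥ 2 ^ m * (h! / (h - m)!) * ((h - δ)! / (h - m - δ)!) / m!`.
  have key : ∀ m ≤ h - δ, 2 ^ m * h.factorial * (h - δ).factorial ≤
      m.factorial * (h - m).factorial * (h - m - δ).factorial *
        liftSum (allEdges V) (fun _ => d) m := by
    intro m
    induction m with
    | zero =>
      intro _
      simp [liftSum, lifts, edeg]
    | succ m ih =>
      intro hm
      have h1 := le_liftSum_succ (V := V) d m
      rw [hh, hδ] at h1
      obtain ⟨s, rfl⟩ : ∃ s, h = m + 1 + s + δ := ⟨h - (m + 1) - δ, by omega⟩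
      have h2 := ih (by omega)
      rw [show m + 1 + s + δ - m - δ = s + 1 by omega,
        show m + 1 + s + δ - m = s + δ + 1 by omega, Nat.factorial_succ s,
        Nat.factorial_succ (s + δ)] at h2
      rw [show m + 1 + s + δ - (m + 1) - δ = s by omega,
        show m + 1 + s + δ - (m + 1) = s + δ by omega, Nat.factorial_succ m]
      rw [show 2 * (m + 1 + s + δ) - 2 * m - 2 * δ = 2 * (s + 1) by omega,
        show 2 * (m + 1 + s + δ) - 2 * m = 2 * (s + δ + 1) by omega] at h1
      generalize liftSum (allEdges V) (fun _ => d) m = W at *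
      generalize liftSum (allEdges V) (fun _ => d) (m + 1) = W' at *
      calc _ = 2 * (2 ^ m * (m + 1 + s + δ).factorial * (m + 1 + s + δ - δ).factorial) := by ring
        _ ≤ 2 * _ := Nat.mul_le_mul_left 2 h2
        _ = m.factorial * (s + δ).factorial * s.factorial *
              (2 * (s + δ + 1) * (s + 1) * W) := by ring
        _ ≤ m.factorial * (s + δ).factorial * s.factorial * ((m + 1) * W') := by
            refine Nat.mul_le_mul_left _ ?_
            nlinarith
        _ = _ := by ring
  have := key (h - δ) le_rfl
  rw [show h - (h - δ) = δ by omega, Nat.sub_self] at this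
  refine Nat.le_of_mul_le_mul_left (?_ : (h - δ).factorial * _ ≤ (h - δ).factorial * _)
    (Nat.factorial_pos _)
  calc _ = _ := by ring
    _ ≤ _ := this
    _ = _ := by simp; ring

/-! ### Completing deficient graphs by switchings -/

/-- The edge sets with `m` edges and all degrees at most `d`. -/
def cappedGraphs (V : Type) [Fintype V] [DecidableEq V] (d m : ℕ) : Finset (Finset (Sym2 V)) :=
  {E ∈ (allEdges V).powersetCard m | ∀ v, edeg E v ≤ d}

/-- A total deficiency of at least two can be served at two vertices, possibly equal. -/
theorem exists_deficient_pair {V : Type} [Fintype V] {f : V → ℕ} (hf : 2 ≤ ∑ v, f v) :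
    ∃ u v, (u ≠ v ∧ 1 ≤ f u ∧ 1 ≤ f v) ∨ (u = v ∧ 2 ≤ f u) := by
  classical
  obtain ⟨u, -, hu⟩ : ∃ u ∈ (univ : Finset V), f u ≠ 0 := by
    by_contra! h
    rw [sum_eq_zero h] at hf
    omega
  by_cases h2 : 2 ≤ f u
  · exact ⟨u, u, Or.inr ⟨rfl, h2⟩⟩
  obtain ⟨v, hv, hv'⟩ : ∃ v ∈ univ.erase u, f v ≠ 0 := by
    by_contra! h
    rw [← add_sum_erase univ f (mem_univ u), sum_eq_zero h] at hf
    omega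
  exact ⟨u, v, Or.inl ⟨(ne_of_mem_erase hv).symm, by omega, by omega⟩⟩

theorem exists_edge_avoiding {V : Type} [DecidableEq V] {d : ℕ}
    {E : Finset (Sym2 V)} (hd : ∀ v, edeg E v ≤ d) {T : Finset V} (hT : #T * d < #E) :
    ∃ x y, s(x, y) ∈ E ∧ x ∉ T ∧ y ∉ T := by
  by_contra! h
  have h1 : E ⊆ T.biUnion fun v => {e ∈ E | v ∈ e} := by
    intro e he
    induction e using Sym2.ind with
    | _ x y =>
      by_cases hx : x ∈ T
      · exact mem_biUnion.2 ⟨x, hx, by simp [he]⟩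
      · exact mem_biUnion.2 ⟨y, by_contra fun hy => hy (h x y he hx), by simp [he]⟩
  have h2 := (card_le_card h1).trans (card_biUnion_le_card_mul _ _ d fun v _ => hd v)
  omega

/-- If `u` and `v` lack degree, choose an edge `xy` far from both and replace it by `ux` and `vy`.
This adds one edge and keeps the degrees at most `d`; the old edge set is recovered from the new
one and from `(u, v, x, y)`. -/
theorem exists_switch_s1 {V : Type} [Fintype V] [DecidableEq V] {d m : ℕ}
    (hm : 2 * (m + 1) ≤ Fintype.card V * d) (hlarge : 2 * (d + 1) * d < m)
    {E : Finset (Sym2 V)} (hE : E ∈ cappedGraphs V d m) :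
    ∃ u v x y, ∃ E' ∈ cappedGraphs V d (m + 1),
      E = insert s(x, y) ((E'.erase s(u, x)).erase s(v, y)) := by
  obtain ⟨hE, hdeg⟩ := mem_filter.1 hE
  obtain ⟨hsub, hcard⟩ := mem_powersetCard.1 hE
  have hdiag : ∀ e ∈ E, ¬ e.IsDiag := fun e he => by simpa [allEdges] using hsub he
  have hsum := sum_sub_edeg (c := fun _ => d) hdiag hdeg
  simp only [sum_const, card_univ, smul_eq_mul] at hsum
  obtain ⟨u, v, huv⟩ := exists_deficient_pair (f := fun v => d - edeg E v) (by omega)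
  -- The edge `xy` must avoid the closed neighbourhoods of `u` and `v`, so that `ux` and `vy`
  -- are new and not loops.
  let N : V → Finset V := fun u => insert u ({w | s(u, w) ∈ E} : Finset V)
  have hN : ∀ u, #(N u) ≤ d + 1 := fun u => (card_insert_le _ _).trans
    (Nat.succ_le_succ (by rw [← edeg_eq_card]; exact hdeg u))
  have hT : #(N u ∪ N v) * d < #E := by
    have h1 := card_union_le (N u) (N v)
    have h2 := hN u
    have h3 := hN v
    have : #(N u ∪ N v) * d ≤ 2 * (d + 1) * d := Nat.mul_le_mul_right d (by omega)
    omega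
  obtain ⟨x, y, hxy, hx, hy⟩ := exists_edge_avoiding hdeg hT
  simp only [N, mem_union, mem_insert, mem_filter, mem_univ, true_and, not_or] at hx hy
  obtain ⟨⟨hxu, hux⟩, hxv, hvx⟩ := hx
  obtain ⟨⟨hyu, huy⟩, hyv, hvy⟩ := hy
  have hxney : x ≠ y := by simpa using hdiag _ hxy
  have h1 : s(v, y) ∉ E.erase s(x, y) := fun h => hvy (mem_of_mem_erase h)
  have h2 : s(u, x) ∉ insert s(v, y) (E.erase s(x, y)) := by
    rw [mem_insert, not_or]
    refine ⟨?_, fun h => hux (mem_of_mem_erase h)⟩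
    rw [Sym2.eq_iff]
    tauto
  refine ⟨u, v, x, y, insert s(u, x) (insert s(v, y) (E.erase s(x, y))), ?_, ?_⟩
  · refine mem_filter.2 ⟨mem_powersetCard.2 ⟨?_, ?_⟩, fun w => ?_⟩
    · refine insert_subset ?_ (insert_subset ?_ ((erase_subset _ _).trans hsub))
      · simpa [allEdges] using Ne.symm hxu
      · simpa [allEdges] using Ne.symm hyv
    · rw [card_insert_of_notMem h2, card_insert_of_notMem h1, card_erase_of_mem hxy, hcard]
      omega
    · rw [edeg_insert h2, edeg_insert h1]
      have h3 := edeg_erase hxy w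
      have h4 := hdeg w
      simp only [Sym2.mem_iff] at h3 ⊢
      by_cases hwx : w = x
      · subst hwx
        simp [hxney, hxv] at h3 ⊢
        omega
      by_cases hwy : w = y
      · subst hwy
        simp [hyu, hwx] at h3 ⊢
        omega
      simp only [hwx, hwy, or_self, or_false, if_false] at h3 ⊢
      rcases huv with ⟨hne, hu, hv⟩ | ⟨rfl, hu⟩
      · by_cases hwu : w = u
        · subst hwu
          simp [hne]
          omega
        by_cases hwv : w = v
        · subst hwv
          simp [hwu]
          omega
        simp [hwu, hwv]
        omega
      · by_cases hwu : w = u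
        · subst hwu
          simp
          omega
        simp [hwu]
        omega
  · rw [erase_insert h2, erase_insert h1, insert_erase hxy]

/-- Requiring one more edge costs only a factor polynomial in the number of vertices. -/
theorem card_cappedGraphs_le {V : Type} [Fintype V] [DecidableEq V] {d m : ℕ}
    (hm : 2 * (m + 1) ≤ Fintype.card V * d) (hlarge : 2 * (d + 1) * d < m) :
    #(cappedGraphs V d m) ≤ Fintype.card V ^ 4 * #(cappedGraphs V d (m + 1)) := by
  let g : (V × V × V × V) × Finset (Sym2 V) → Finset (Sym2 V) := fun z =>
    insert s(z.1.2.2.1, z.1.2.2.2)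
      ((z.2.erase s(z.1.1, z.1.2.2.1)).erase s(z.1.2.1, z.1.2.2.2))
  have h1 : cappedGraphs V d m ⊆
      ((univ : Finset (V × V × V × V)) ×ˢ cappedGraphs V d (m + 1)).image g := by
    intro E hE
    obtain ⟨u, v, x, y, E', hE', h⟩ := exists_switch_s1 hm hlarge hE
    exact mem_image.2 ⟨((u, v, x, y), E'), by simp [hE'], h.symm⟩
  refine (card_le_card h1).trans (card_image_le.trans (le_of_eq ?_))
  rw [card_product, card_univ]
  simp only [Fintype.card_prod]
  ring

theorem liftSum_le_cappedGraphs {V : Type} [Fintype V] [DecidableEq V] (d m : ℕ) :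
    liftSum (allEdges V) (fun _ => d) m ≤ #(cappedGraphs V d m) * d.factorial ^ Fintype.card V := by
  unfold liftSum cappedGraphs
  rw [← smul_eq_mul, ← sum_const, sum_filter]
  refine sum_le_sum fun E _ => ?_
  split_ifs with h
  · refine (prod_le_prod' (g := fun _ => d.factorial) fun v _ => ?_).trans (by simp)
    rw [← Nat.factorial_mul_descFactorial (h v)]
    exact Nat.le_mul_of_pos_left _ (Nat.factorial_pos _)
  · by_contra h0
    exact h (edeg_le_of_lifts_ne_zero (by omega))

/-- Lower bound for the number of `d`-regular graphs, up to a polynomial factor: almost perfect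
matchings are numerous by `le_liftSum`, and the `δ` missing edges are added by switchings. -/
theorem le_card_regular {V : Type} [Fintype V] [DecidableEq V] {d h δ : ℕ}
    (hh : Fintype.card V * d = 2 * h) (hδ : d * (d + 1) = 2 * δ) (hle : δ + 2 * (d + 1) * d < h) :
    2 ^ (h - δ) * h.factorial ≤ δ.factorial * (d.factorial ^ Fintype.card V *
      (Fintype.card V ^ (4 * δ) * #(exactGraphs (allEdges V) fun _ => d))) := by
  have h1 : ∀ s ≤ δ, #(cappedGraphs V d (h - δ)) ≤
      Fintype.card V ^ (4 * s) * #(cappedGraphs V d (h - δ + s)) := by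
    intro s
    induction s with
    | zero => simp
    | succ s ih =>
      intro hs
      refine (ih (by omega)).trans ?_
      have := card_cappedGraphs_le (V := V) (d := d) (m := h - δ + s) (by omega) (by omega)
      calc _ ≤ Fintype.card V ^ (4 * s) * _ := Nat.mul_le_mul_left _ this
        _ = _ := by rw [← add_assoc]; ring
  have h2 := h1 δ le_rfl
  rw [show h - δ + δ = h by omega] at h2
  have h3 : #(cappedGraphs V d h) ≤ #(exactGraphs (allEdges V) fun _ => d) := by
    refine card_le_card fun E hE => ?_
    obtain ⟨hE, hdeg⟩ := mem_filter.1 hE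
    obtain ⟨hsub, hcard⟩ := mem_powersetCard.1 hE
    refine mem_exactGraphs.2 ⟨hsub, fun v => ?_⟩
    have hsum := sum_sub_edeg (c := fun _ => d) (fun e he => by simpa [allEdges] using hsub he) hdeg
    simp only [sum_const, card_univ, smul_eq_mul, hcard, hh, Nat.sub_self] at hsum
    have h4 := sum_eq_zero_iff.1 hsum v (mem_univ v)
    have h5 := hdeg v
    omega
  refine (le_liftSum hh hδ (by omega)).trans (Nat.mul_le_mul_left _ ?_)
  refine (liftSum_le_cappedGraphs d (h - δ)).trans ?_
  rw [mul_comm]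
  exact Nat.mul_le_mul_left _ (h2.trans (Nat.mul_le_mul_left _ h3))

/-! ### Stirling estimates and the exponential rate -/

/-- Mathlib states only the weak monotonicity of this sequence; the strict one is the source of
the strict inequality in `rowRate_lt`. -/
theorem stirlingSeq_succ_lt (n : ℕ) :
    Stirling.stirlingSeq (n + 2) < Stirling.stirlingSeq (n + 1) := by
  have h := Stirling.log_stirlingSeq_sdiff_hasSum n
  have h0 : 0 < Real.log (Stirling.stirlingSeq (n + 1)) -
      Real.log (Stirling.stirlingSeq (n + 2)) :=
    hasSum_lt (i := 0) (fun i => by simp only; positivity) (by positivity) hasSum_zero h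
  exact (Real.log_lt_log_iff (Stirling.stirlingSeq'_pos (n + 1)) (Stirling.stirlingSeq'_pos n)).1
    (by linarith)

theorem stirlingSeq_lt {m n : ℕ} (hm : 0 < m) (hmn : m < n) :
    Stirling.stirlingSeq n < Stirling.stirlingSeq m := by
  obtain ⟨m, rfl⟩ := Nat.exists_eq_succ_of_ne_zero hm.ne'
  refine lt_of_le_of_lt ?_ (stirlingSeq_succ_lt m)
  obtain ⟨n, rfl⟩ := Nat.exists_eq_succ_of_ne_zero (by omega : n ≠ 0)
  exact Stirling.stirlingSeq'_antitone (show m + 1 ≤ n by omega)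

/-- The square of `n! = σ √(2 n) (n / e) ^ n`, where `σ` is the `n`-th term of the
Stirling sequence. -/
theorem sq_factorial_eq {n : ℕ} (hn : 0 < n) :
    (n.factorial : ℝ) ^ 2 =
      Stirling.stirlingSeq n ^ 2 * (2 * n) * ((n : ℝ) ^ n) ^ 2 / (Real.exp 1 ^ n) ^ 2 := by
  have h : (0 : ℝ) < n := by exact_mod_cast hn
  unfold Stirling.stirlingSeq
  rw [div_pow, mul_pow, Real.sq_sqrt (by positivity), div_pow]
  field_simp

/-- The entropy bound: a probability vector on `k` points has entropy at most `log k`, written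
multiplicatively for the vector `a i / d`. It is the weighted inequality between the geometric and
arithmetic means of the numbers `1 / a i` with weights `a i`. -/
theorem pow_sum_le {ι : Type} [Fintype ι] {a : ι → ℕ} (ha : ∀ i, 0 < a i) {d : ℕ} (hd : 0 < d)
    (hsum : ∑ i, a i = d) :
    (d : ℝ) ^ d ≤ (Fintype.card ι : ℝ) ^ d * ∏ i, (a i : ℝ) ^ a i := by
  have ha' : ∀ i, (0 : ℝ) < a i := fun i => by exact_mod_cast ha i
  have hd' : (0 : ℝ) < d := by exact_mod_cast hd
  have hs : ∑ i, (a i : ℝ) = d := by exact_mod_cast hsum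
  have h := Real.geom_mean_le_arith_mean univ (fun i => (a i : ℝ)) (fun i => (a i : ℝ)⁻¹)
    (fun i _ => (ha' i).le) (by rw [hs]; exact hd') (fun i _ => (inv_pos.2 (ha' i)).le)
  rw [hs, sum_congr rfl fun i _ => mul_inv_cancel₀ (ha' i).ne', sum_const, nsmul_one,
    card_univ] at h
  simp_rw [Real.rpow_natCast, inv_pow, prod_inv_distrib] at h
  have hP : 0 < ∏ i, (a i : ℝ) ^ a i := prod_pos fun i _ => pow_pos (ha' i) _
  have h2 := pow_le_pow_left₀ (by positivity) h d
  rw [Real.rpow_inv_natCast_pow (by positivity) hd.ne', div_pow, inv_le_iff_one_le_mul₀ hP,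
    div_mul_eq_mul_div, le_div_iff₀ (by positivity), one_mul] at h2
  exact h2

theorem sum_le_card_mul_prod {ι : Type} [Fintype ι] {a : ι → ℕ} (ha : ∀ i, 0 < a i) :
    ∑ i, a i ≤ Fintype.card ι * ∏ i, a i := by
  rw [← smul_eq_mul, ← card_univ, ← sum_const]
  exact sum_le_sum fun i _ => Nat.le_of_dvd (prod_pos fun j _ => ha j)
    (dvd_prod_of_mem a (mem_univ i))

/-- The exponential rate, per vertex of one cluster, contributed by the row `a` of the matrix to the
square of the ratio of (cluster assignments and compatible graphs) to (regular graphs). -/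
noncomputable def rowRate {ι : Type} [Fintype ι] (d : ℕ) (a : ι → ℕ) : ℝ :=
  (Fintype.card ι : ℝ) ^ 2 * (d.factorial : ℝ) ^ 2 * (∏ i, (a i : ℝ) ^ a i) /
    ((∏ i, ((a i).factorial : ℝ) ^ 2) * (Fintype.card ι * d : ℝ) ^ d)

/-- The rate is strictly smaller than the claimed one. After exact Stirling formulas, the powers
are controlled by `pow_sum_le`, the factor `d / ∏ a i` by `d ≤ k ∏ a i`, and each Stirling term of
the denominator is at least `√π`, while one of them strictly exceeds the term of `d!`. -/
theorem rowRate_lt {ι : Type} [Fintype ι] [DecidableEq ι] {a : ι → ℕ} (ha : ∀ i, 0 < a i) {d : ℕ}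
    (hsum : ∑ i, a i = d) (hk : 2 ≤ Fintype.card ι) :
    rowRate d a <
      (Fintype.card ι : ℝ) ^ 3 / (2 * Real.pi) ^ (Fintype.card ι - 1) := by
  set k := Fintype.card ι with hkdef
  obtain ⟨i₀, i₁, hne⟩ := Fintype.exists_pair_of_one_lt_card (α := ι) (by omega)
  have hlt : a i₀ < d := by
    rw [← hsum, ← add_sum_erase univ a (mem_univ i₀)]
    have h1 := single_le_sum (f := a) (s := univ.erase i₀) (fun _ _ => Nat.zero_le _)
      (mem_erase.2 ⟨hne.symm, mem_univ i₁⟩)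
    have h2 := ha i₁
    omega
  have hd : 0 < d := by omega
  have hd' : (0 : ℝ) < d := by exact_mod_cast hd
  have hk' : (0 : ℝ) < k := by exact_mod_cast (by omega : 0 < k)
  have ha' : ∀ i, (0 : ℝ) < a i := fun i => by exact_mod_cast ha i
  have hpi := Real.pi_pos
  set σ : ℕ → ℝ := Stirling.stirlingSeq with hσ
  have hσpos : ∀ n, 0 < n → 0 < σ n := fun n hn =>
    (Real.sqrt_pos.2 hpi).trans_le (Stirling.sqrt_pi_le_stirlingSeq hn.ne')
  have hσpi : ∀ n, 0 < n → Real.pi ≤ σ n ^ 2 := fun n hn => by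
    rw [← Real.sqrt_le_left (hσpos n hn).le]
    exact Stirling.sqrt_pi_le_stirlingSeq hn.ne'
  have hP : 0 < ∏ i, (a i : ℝ) ^ a i := prod_pos fun i _ => pow_pos (ha' i) _
  have hQ : 0 < ∏ i, (σ (a i) ^ 2 * (2 * a i)) :=
    prod_pos fun i _ => by have := hσpos _ (ha i); have := ha' i; positivity
  have he : ∏ i, (Real.exp 1 ^ a i) ^ 2 = (Real.exp 1 ^ d) ^ 2 := by
    rw [prod_pow, prod_pow_eq_pow_sum, hsum]
  have hsplit : rowRate d a = (k : ℝ) ^ 2 * (σ d ^ 2 * (2 * d) / ∏ i, (σ (a i) ^ 2 * (2 * a i))) *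
      ((d : ℝ) ^ d / ((k : ℝ) ^ d * ∏ i, (a i : ℝ) ^ a i)) := by
    unfold rowRate
    rw [sq_factorial_eq hd, prod_congr rfl fun i _ => sq_factorial_eq (ha i), prod_div_distrib,
      he, prod_mul_distrib, prod_pow univ 2 fun i => (a i : ℝ) ^ a i, mul_pow,
      ← hkdef, ← hσ]
    have hexp := Real.exp_pos 1
    generalize ∏ i, (σ (a i) ^ 2 * (2 * a i)) = Q at hQ ⊢
    generalize ∏ i, (a i : ℝ) ^ a i = P at hP ⊢
    field_simp
  have hG : (d : ℝ) ^ d / ((k : ℝ) ^ d * ∏ i, (a i : ℝ) ^ a i) ≤ 1 :=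
    div_le_one_of_le₀ (pow_sum_le ha hd hsum) (by positivity)
  have hmain : σ d ^ 2 * (2 * d) / ∏ i, (σ (a i) ^ 2 * (2 * a i)) <
      k / (2 * Real.pi) ^ (k - 1) := by
    rw [div_lt_div_iff₀ hQ (by positivity)]
    have h1 : σ (a i₀) ^ 2 * Real.pi ^ (k - 1) ≤ ∏ i, σ (a i) ^ 2 := by
      rw [← mul_prod_erase univ _ (mem_univ i₀)]
      refine mul_le_mul_of_nonneg_left ?_ (sq_nonneg _)
      rw [hkdef, ← card_univ, ← card_erase_of_mem (mem_univ i₀), ← prod_const]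
      exact prod_le_prod (fun _ _ => hpi.le) fun i _ => hσpi _ (ha i)
    have h2 : (d : ℝ) ≤ k * ∏ i, (a i : ℝ) := by
      have := sum_le_card_mul_prod ha
      rw [hsum] at this
      exact_mod_cast this
    have h3 : σ d ^ 2 < σ (a i₀) ^ 2 :=
      pow_lt_pow_left₀ (stirlingSeq_lt (ha i₀) hlt) (hσpos d hd).le two_ne_zero
    rw [prod_mul_distrib, prod_mul_distrib, prod_const, card_univ, ← hkdef, mul_pow]
    have h4 : (2 : ℝ) ^ k = 2 * 2 ^ (k - 1) := by
      rw [← pow_succ', show k - 1 + 1 = k by omega]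
    rw [h4]
    calc σ d ^ 2 * (2 * d) * (2 ^ (k - 1) * Real.pi ^ (k - 1))
        < σ (a i₀) ^ 2 * (2 * d) * (2 ^ (k - 1) * Real.pi ^ (k - 1)) := by gcongr
      _ = (σ (a i₀) ^ 2 * Real.pi ^ (k - 1)) * d * (2 * 2 ^ (k - 1)) := by ring
      _ ≤ (∏ i, σ (a i) ^ 2) * (k * ∏ i, (a i : ℝ)) * (2 * 2 ^ (k - 1)) := by
          have : 0 ≤ ∏ i, σ (a i) ^ 2 := prod_nonneg fun _ _ => sq_nonneg _
          gcongr
      _ = _ := by ring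
  rw [hsplit]
  calc _ ≤ (k : ℝ) ^ 2 * (σ d ^ 2 * (2 * d) / ∏ i, (σ (a i) ^ 2 * (2 * a i))) * 1 := by
        have := hσpos d hd
        gcongr
    _ < (k : ℝ) ^ 2 * (k / (2 * Real.pi) ^ (k - 1)) * 1 := by gcongr
    _ = _ := by ring

theorem base_lt_one {k : ℕ} (hk : 3 ≤ k) : (k : ℝ) ^ 3 / (2 * Real.pi) ^ (k - 1) < 1 := by
  have hpi := Real.pi_gt_three
  have h : ∀ k : ℕ, 3 ≤ k → k ^ 3 < 6 ^ (k - 1) := by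
    intro k hk
    induction k, hk using Nat.le_induction with
    | base => norm_num
    | succ k hk ih =>
      rw [show k + 1 - 1 = k - 1 + 1 by omega, pow_succ 6]
      nlinarith [Nat.mul_le_mul hk hk, Nat.mul_le_mul (Nat.mul_le_mul hk hk) hk,
        Nat.mul_le_mul hk (Nat.mul_le_mul_left k hk)]
  rw [div_lt_one (by positivity)]
  calc (k : ℝ) ^ 3 < 6 ^ (k - 1) := by exact_mod_cast h k hk
    _ ≤ _ := by gcongr; linarith

/-- Stirling upper bound with a crude polynomial factor, uniform in `n ≤ b`. -/
theorem factorial_le {n : ℕ} {b : ℝ} (hb : 1 ≤ b) (hn : n ≤ b) :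
    (n.factorial : ℝ) ≤ Real.exp 1 * b * (n / Real.exp 1) ^ n := by
  rcases Nat.eq_zero_or_pos n with rfl | hpos
  · have := Real.add_one_le_exp 1
    simp
    nlinarith
  have hn' : (1 : ℝ) ≤ n := by exact_mod_cast hpos
  have h1 : Stirling.stirlingSeq n ≤ Real.exp 1 / √2 := by
    rw [← Stirling.stirlingSeq_one]
    rcases Nat.eq_or_lt_of_le (show 1 ≤ n from hpos) with h | h
    · rw [← h]
    · exact (stirlingSeq_lt one_pos h).le
  unfold Stirling.stirlingSeq at h1
  rw [div_le_iff₀ (by positivity), Real.sqrt_mul (by norm_num)] at h1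
  refine h1.trans ?_
  have h2 : √(n : ℝ) ≤ b := (Real.sqrt_le_sqrt (by nlinarith : (n : ℝ) ≤ n ^ 2)).trans
    (by rw [Real.sqrt_sq (by positivity)]; exact hn)
  calc _ = Real.exp 1 * √(n : ℝ) * (n / Real.exp 1) ^ n := by field_simp
    _ ≤ _ := by gcongr

theorem pow_le_factorial (n : ℕ) : ((n : ℝ) / Real.exp 1) ^ n ≤ n.factorial := by
  rcases Nat.eq_zero_or_pos n with rfl | hpos
  · simp
  refine le_trans ?_ (Stirling.le_factorial_stirling n)
  refine le_mul_of_one_le_left (by positivity) (Real.one_le_sqrt.2 ?_)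
  have hn' : (1 : ℝ) ≤ n := by exact_mod_cast hpos
  nlinarith [Real.pi_gt_three]

/-! ### Counting the graphs compatible with a partition -/

/-- The potential edges joining the two clusters of the unordered pair `t`; for `t = s(i, i)` these
are the potential edges inside the cluster `i`. -/
def blockEdges {V : Type} [Fintype V] [DecidableEq V] {k : ℕ} (p : V → Fin k)
    (t : Sym2 (Fin k)) : Finset (Sym2 V) :=
  {e ∈ allEdges V | e.map p = t}

/-- The possible edge sets of the block `t`: every vertex of a cluster of `t` has degree `α` and
every other vertex has degree `0`. -/
def blockGraphs {V : Type} [Fintype V] [DecidableEq V] {k : ℕ} (p : V → Fin k)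
    (t : Sym2 (Fin k)) (α : ℕ) : Finset (Finset (Sym2 V)) :=
  exactGraphs (blockEdges p t) fun v => if p v ∈ t then α else 0

theorem not_isDiag_of_mem_blockEdges {V : Type} [Fintype V] [DecidableEq V] {k : ℕ}
    (p : V → Fin k) (t : Sym2 (Fin k)) : ∀ e ∈ blockEdges p t, ¬ e.IsDiag := by
  intro e he
  simpa [allEdges] using (mem_filter.1 he).1

theorem two_mul_sum_edgeProd_le {V : Type} [Fintype V] [DecidableEq V] {F : Finset (Sym2 V)}
    (hF : ∀ e ∈ F, ¬ e.IsDiag) (r : V → ℕ) :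
    2 * ∑ e ∈ F, edgeProd r e ≤ (∑ v, r v) ^ 2 := by
  rw [two_mul_sum_edgeProd hF, sq, sum_mul_sum, ← sum_product', univ_product_univ]
  exact sum_le_sum_of_subset (filter_subset _ _)

/-- Between two different clusters, `4 x y ≤ (x + y) ^ 2` improves the constant from `2` to `4`. -/
theorem four_mul_sum_edgeProd_le {V : Type} [Fintype V] [DecidableEq V] {k : ℕ}
    (p : V → Fin k) {i j : Fin k} (hij : i ≠ j) (r : V → ℕ) :
    4 * ∑ e ∈ blockEdges p s(i, j), edgeProd r e ≤ (∑ v, r v) ^ 2 := by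
  have h1 := two_mul_sum_edgeProd (not_isDiag_of_mem_blockEdges p s(i, j)) r
  have hsub : ({x : V × V | s(x.1, x.2) ∈ blockEdges p s(i, j)} : Finset (V × V)) ⊆
      ({v | p v = i} : Finset V) ×ˢ ({v | p v = j} : Finset V) ∪
        ({v | p v = j} : Finset V) ×ˢ ({v | p v = i} : Finset V) := by
    rintro ⟨x, y⟩ h
    have h2 := (mem_filter.1 (mem_filter.1 h).2).2
    simpa [Sym2.eq_iff] using h2
  have h2 : 2 * ∑ e ∈ blockEdges p s(i, j), edgeProd r e ≤
      2 * ((∑ v with p v = i, r v) * ∑ v with p v = j, r v) := by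
    rw [h1]
    refine (sum_le_sum_of_subset hsub).trans ((Nat.le_add_right _ _).trans
      (sum_union_inter.le.trans ?_))
    rw [sum_product, sum_product]
    simp only
    rw [← sum_mul_sum, ← sum_mul_sum]
    linarith
  have h3 : (∑ v with p v = i, r v) + ∑ v with p v = j, r v ≤ ∑ v, r v := by
    rw [← sum_union]
    · exact sum_le_sum_of_subset (subset_univ _)
    · rw [disjoint_filter]
      rintro v - rfl
      exact hij
  have h4 := Nat.pow_le_pow_left h3 2
  have h5 := four_mul_le_pow_two_add (∑ v with p v = i, r v) (∑ v with p v = j, r v)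
  linarith

/-- Bound for the number of `α`-regular graphs on one cluster, where `h = n α / 2` is the number
of edges. -/
theorem card_blockGraphs_diag_le {V : Type} [Fintype V] [DecidableEq V] {k n : ℕ}
    {p : V → Fin k} (hp : ∀ i, #{v | p v = i} = n) (i : Fin k) {α h : ℕ} (hα : n * α = 2 * h) :
    #(blockGraphs p s(i, i) α) * α.factorial ^ n ≤ 2 ^ h * h.factorial := by
  have hd := not_isDiag_of_mem_blockEdges p s(i, i)
  have h1 := card_exactGraphs_le hd (q := 2) (two_mul_sum_edgeProd_le hd)
    (c := fun v => if p v ∈ s(i, i) then α else 0) (h := h)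
    (by simp [← sum_filter, hp, hα])
  have h2 : ∏ v, (if p v ∈ s(i, i) then α else 0).factorial = α.factorial ^ n := by
    rw [← hp i, ← prod_const, prod_filter]
    refine prod_congr rfl fun v _ => ?_
    simp only [Sym2.mem_iff, or_self]
    split_ifs <;> simp
  rw [h2, show (4 : ℕ) = 2 * 2 from rfl, mul_pow, mul_assoc] at h1
  exact Nat.le_of_mul_le_mul_left h1 (by positivity)

/-- Bound for the number of `α`-regular bipartite graphs between two clusters. -/
theorem card_blockGraphs_offDiag_le {V : Type} [Fintype V] [DecidableEq V] {k n : ℕ}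
    {p : V → Fin k} (hp : ∀ i, #{v | p v = i} = n) {i j : Fin k} (hij : i ≠ j) (α : ℕ) :
    #(blockGraphs p s(i, j) α) * (α.factorial ^ n) ^ 2 ≤ (n * α).factorial := by
  have hdisj : Disjoint ({v | p v = i} : Finset V) ({v | p v = j} : Finset V) := by
    rw [disjoint_filter]
    rintro v - rfl
    exact hij
  have hcard : #{v | p v ∈ s(i, j)} = 2 * n := by
    simp_rw [Sym2.mem_iff]
    rw [filter_or, card_union_of_disjoint hdisj, hp, hp, two_mul]
  have h1 := card_exactGraphs_le (not_isDiag_of_mem_blockEdges p s(i, j)) (q := 4)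
    (four_mul_sum_edgeProd_le p hij)
    (c := fun v => if p v ∈ s(i, j) then α else 0) (h := n * α)
    (by rw [← sum_filter, sum_const, hcard, smul_eq_mul, mul_assoc])
  have h2 : ∏ v, (if p v ∈ s(i, j) then α else 0).factorial = (α.factorial ^ n) ^ 2 := by
    rw [← pow_mul, mul_comm n, ← hcard, ← prod_const, prod_filter]
    refine prod_congr rfl fun v _ => ?_
    split_ifs <;> simp
  rw [h2] at h1
  exact Nat.le_of_mul_le_mul_left h1 (by positivity)

/-- The square root, up to a polynomial factor, of the number of bipartite `α`-regular graphs on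
`n + n` vertices. A block inside a cluster has one such factor, a block between two clusters has
two, so each ordered pair of clusters contributes exactly one. -/
noncomputable def blockWeight (n α : ℕ) : ℝ :=
  √(((n * α : ℕ) / Real.exp 1) ^ (n * α)) / (α.factorial : ℝ) ^ n

/-- Both kinds of blocks in a common form: one factor `blockWeight` for each ordered pair of
clusters above `t`. -/
theorem card_blockGraphs_le {V : Type} [Fintype V] [DecidableEq V] {k n : ℕ}
    {p : V → Fin k} (hp : ∀ i, #{v | p v = i} = n) {a : Fin k → Fin k → ℕ}
    (hsym : ∀ i j, a i j = a j i) {b : ℝ} (hb : 1 ≤ b) (hab : ∀ i j, (n * a i j : ℕ) ≤ b)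
    (t : Sym2 (Fin k)) :
    (#(blockGraphs p t (Sym2.lift ⟨a, hsym⟩ t)) : ℝ) ≤ Real.exp 1 * b *
      ∏ x : Fin k × Fin k with s(x.1, x.2) = t, blockWeight n (a x.1 x.2) := by
  induction t using Sym2.ind with
  | _ i j =>
    have hexp := Real.exp_pos 1
    simp only [Sym2.lift_mk]
    by_cases hij : i = j
    · subst hij
      have h1 : ({x | s(x.1, x.2) = s(i, i)} : Finset (Fin k × Fin k)) = {(i, i)} := by
        ext ⟨x, y⟩
        simp
      rw [h1, prod_singleton, blockWeight, ← mul_div_assoc, le_div_iff₀ (by positivity)]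
      set α := a i i with hα
      rcases (blockGraphs p s(i, i) α).eq_empty_or_nonempty with h0 | ⟨E, hE⟩
      · rw [h0]
        simp only [card_empty, Nat.cast_zero, zero_mul]
        positivity
      -- A regular graph exists on the cluster, so `n * α` is even.
      · obtain ⟨hE, hdeg⟩ := mem_exactGraphs.1 hE
        have hs := sum_edeg fun e he =>
          not_isDiag_of_mem_blockEdges p s(i, i) e (hE he)
        simp_rw [hdeg] at hs
        simp only [Sym2.mem_iff, or_self, ← sum_filter, sum_const, hp, smul_eq_mul] at hs
        generalize #E = h at hs
        have h2 : (#(blockGraphs p s(i, i) α) : ℝ) * (α.factorial : ℝ) ^ n ≤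
            2 ^ h * h.factorial := by exact_mod_cast card_blockGraphs_diag_le hp i hs
        have h3 : (h : ℝ) ≤ b := le_trans
          (by rw [hs]; push_cast; linarith [h.cast_nonneg (α := ℝ)]) (hab i i)
        refine h2.trans ((mul_le_mul_of_nonneg_left (factorial_le hb h3) (by positivity)).trans
          (le_of_eq ?_))
        rw [hs, mul_comm 2 h, pow_mul, Real.sqrt_sq (by positivity)]
        push_cast
        rw [mul_div_right_comm, mul_pow]
        ring
    · have h1 : ({x | s(x.1, x.2) = s(i, j)} : Finset (Fin k × Fin k)) = {(i, j), (j, i)} := by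
        ext ⟨x, y⟩
        simp
      rw [h1, prod_pair (by simp [hij]), hsym j i]
      set α := a i j with hα
      have h2 : (#(blockGraphs p s(i, j) α) : ℝ) * ((α.factorial : ℝ) ^ n) ^ 2 ≤
          (n * α).factorial := by exact_mod_cast card_blockGraphs_offDiag_le hp hij α
      rw [blockWeight, ← sq, div_pow, Real.sq_sqrt (by positivity), ← mul_div_assoc,
        le_div_iff₀ (by positivity)]
      exact h2.trans (factorial_le hb (hab i j))

/-- The edge set of `G` as a finset, without decidability assumptions. -/
noncomputable def edgesOf {V : Type} [Finite V] (G : SimpleGraph V) : Finset (Sym2 V) :=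
  (Set.toFinite G.edgeSet).toFinset

theorem mem_edgesOf {V : Type} [Finite V] {G : SimpleGraph V} {e : Sym2 V} :
    e ∈ edgesOf G ↔ e ∈ G.edgeSet := by
  simp [edgesOf]

theorem edgesOf_injective {V : Type} [Finite V] :
    Function.Injective (edgesOf : SimpleGraph V → Finset (Sym2 V)) := by
  intro G H h
  apply SimpleGraph.edgeSet_injective
  ext e
  rw [← mem_edgesOf, h, mem_edgesOf]

/-- A compatible graph is determined by its blocks. -/
theorem ncard_compat_le_prod {k n : ℕ} {a : Fin k → Fin k → ℕ} (hsym : ∀ i j, a i j = a j i)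
    (p : Fin (k * n) → Fin k) :
    {G | Compat k n a p G}.ncard ≤ ∏ t, #(blockGraphs p t (Sym2.lift ⟨a, hsym⟩ t)) := by
  rw [← Fintype.card_piFinset, ← Set.ncard_coe_finset]
  refine Set.ncard_le_ncard_of_injOn (fun G t => {e ∈ edgesOf G | e.map p = t}) ?_ ?_
    (Set.toFinite _)
  · intro G hG
    refine mem_coe.2 (Fintype.mem_piFinset.2 fun t => ?_)
    refine mem_exactGraphs.2 ⟨fun e he => ?_, fun v => ?_⟩
    · obtain ⟨h1, h2⟩ := mem_filter.1 he
      refine mem_filter.2 ⟨?_, h2⟩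
      simpa [allEdges] using SimpleGraph.not_isDiag_of_mem_edgeSet _ (mem_edgesOf.1 h1)
    · rw [edeg_eq_card]
      split_ifs with h
      · obtain ⟨j, rfl⟩ := h
        rw [Sym2.lift_mk]
        change _ = a (p v) j
        rw [← hG v j, degIn, ← Set.ncard_coe_finset]
        congr 1
        ext w
        simp [mem_edgesOf, and_comm]
        exact fun _ h1 h2 => h2.trans h1
      · refine card_eq_zero.2 (filter_eq_empty_iff.2 fun w _ hw => h ?_)
        rw [← (mem_filter.1 hw).2]
        simp
  · intro G _ H _ h
    apply edgesOf_injective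
    ext e
    have h1 := congrFun h (e.map p)
    have h2 := congrArg (e ∈ ·) h1
    simpa using h2

/-- Bound for the number of graphs compatible with a given partition, up to a polynomial factor. -/
theorem ncard_compat_le {k n : ℕ} {a : Fin k → Fin k → ℕ} (hsym : ∀ i j, a i j = a j i)
    {p : Fin (k * n) → Fin k} (hp : IsEquiPartition k n p) {b : ℝ} (hb : 1 ≤ b)
    (hab : ∀ i j, (n * a i j : ℕ) ≤ b) :
    ({G | Compat k n a p G}.ncard : ℝ) ≤ (Real.exp 1 * b) ^ Fintype.card (Sym2 (Fin k)) *
      ∏ i, ∏ j, blockWeight n (a i j) := by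
  have hp' : ∀ i, #{v | p v = i} = n := fun i => by
    refine Eq.trans ?_ (hp i)
    rw [← Set.ncard_coe_finset]
    congr 1
    ext v
    simp
  calc ({G | Compat k n a p G}.ncard : ℝ)
      ≤ ∏ t, (#(blockGraphs p t (Sym2.lift ⟨a, hsym⟩ t)) : ℝ) := by
        exact_mod_cast ncard_compat_le_prod hsym p
    _ ≤ ∏ t : Sym2 (Fin k), (Real.exp 1 * b *
          ∏ x : Fin k × Fin k with s(x.1, x.2) = t, blockWeight n (a x.1 x.2)) :=
        prod_le_prod (fun _ _ => Nat.cast_nonneg _) fun t _ => card_blockGraphs_le hp' hsym hb hab t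
    _ = _ := by
        rw [prod_mul_distrib, prod_const, card_univ, prod_fiberwise, ← univ_product_univ,
          prod_product]

theorem card_regular_le {N d : ℕ} :
    #(exactGraphs (allEdges (Fin N)) fun _ => d) ≤
      {G : SimpleGraph (Fin N) | ∀ v, (G.neighborSet v).ncard = d}.ncard := by
  rw [← Set.ncard_coe_finset]
  have hdiag : ∀ E ⊆ allEdges (Fin N),
      (SimpleGraph.fromEdgeSet (E : Set (Sym2 (Fin N)))).edgeSet = E := by
    intro E hE
    rw [SimpleGraph.edgeSet_fromEdgeSet]
    ext e
    simp only [Set.mem_sdiff, mem_coe, and_iff_left_iff_imp]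
    intro he
    simpa [allEdges] using hE he
  refine Set.ncard_le_ncard_of_injOn
    (fun E => SimpleGraph.fromEdgeSet (E : Set (Sym2 (Fin N)))) ?_ ?_ (Set.toFinite _)
  · intro E hE v
    obtain ⟨hE, hdeg⟩ := mem_exactGraphs.1 (mem_coe.1 hE)
    rw [← hdeg v, edeg_eq_card, ← Set.ncard_coe_finset]
    congr 1
    ext w
    rw [SimpleGraph.mem_neighborSet, ← SimpleGraph.mem_edgeSet, hdiag E hE]
    simp
  · intro E hE F hF h
    have h1 := hdiag E (mem_exactGraphs.1 (mem_coe.1 hE)).1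
    have h2 := hdiag F (mem_exactGraphs.1 (mem_coe.1 hF)).1
    have h3 := congrArg SimpleGraph.edgeSet h
    simp only [h1, h2] at h3
    exact_mod_cast h3

/-! ### The mass of the support -/

/-- The handshake lemma. -/
theorem even_of_regular {N d : ℕ} {G : SimpleGraph (Fin N)}
    (hG : ∀ v, (G.neighborSet v).ncard = d) : ∃ h, N * d = 2 * h := by
  refine ⟨#(edgesOf G), ?_⟩
  rw [← sum_edeg fun e he => SimpleGraph.not_isDiag_of_mem_edgeSet _ (mem_edgesOf.1 he)]
  have h1 : ∀ v, edeg (edgesOf G) v = d := fun v => by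
    rw [← hG v, edeg_eq_card, ← Set.ncard_coe_finset]
    congr 1
    ext w
    simp [mem_edgesOf]
  simp [h1]

/-- The lower bound for the number of `d`-regular graphs, squared so that the exponent is `N * d`
and not its half. -/
theorem sq_le_card_regular {N d h δ : ℕ} (hh : N * d = 2 * h) (hδ : d * (d + 1) = 2 * δ)
    (hle : δ + 2 * (d + 1) * d < h) :
    ((N * d : ℕ) / Real.exp 1) ^ (N * d) ≤
      (2 ^ δ * δ.factorial : ℝ) ^ 2 * ((d.factorial : ℝ) ^ N) ^ 2 * (N : ℝ) ^ (8 * δ) *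
        ({G : SimpleGraph (Fin N) | ∀ v, (G.neighborSet v).ncard = d}.ncard : ℝ) ^ 2 := by
  have h1 := le_card_regular (V := Fin N) (by rwa [Fintype.card_fin]) hδ hle
  rw [Fintype.card_fin] at h1
  have h2 := h1.trans (Nat.mul_le_mul_left _ (Nat.mul_le_mul_left _
    (Nat.mul_le_mul_left _ card_regular_le)))
  generalize {G : SimpleGraph (Fin N) | ∀ v, (G.neighborSet v).ncard = d}.ncard = D at h2
  have h3 : (2 : ℝ) ^ (h - δ) * h.factorial ≤
      δ.factorial * ((d.factorial : ℝ) ^ N * ((N : ℝ) ^ (4 * δ) * D)) := by exact_mod_cast h2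
  have h4 : ((2 * h : ℕ) / Real.exp 1) ^ h ≤
      2 ^ δ * (δ.factorial * ((d.factorial : ℝ) ^ N * ((N : ℝ) ^ (4 * δ) * D))) := by
    calc ((2 * h : ℕ) / Real.exp 1) ^ h = 2 ^ h * (h / Real.exp 1) ^ h := by
          rw [← mul_pow]; push_cast; ring
      _ ≤ 2 ^ h * h.factorial := by gcongr; exact pow_le_factorial h
      _ = 2 ^ δ * (2 ^ (h - δ) * h.factorial) := by
          rw [← mul_assoc, ← pow_add, Nat.add_sub_cancel' (by omega)]
      _ ≤ _ := by gcongr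
  rw [hh, mul_comm 2 h, pow_mul, mul_comm h 2]
  refine (pow_le_pow_left₀ (by positivity) h4 2).trans (le_of_eq ?_)
  ring

/-- One row of the matrix, divided by the contribution of one cluster to the count of regular
graphs, has exponential rate exactly `rowRate`. -/
theorem prod_blockWeight_sq {ι : Type} [Fintype ι] [Nonempty ι] {a : ι → ℕ} {d n : ℕ}
    (hsum : ∑ i, a i = d) (hd : 0 < d) :
    (∏ i, blockWeight n (a i) ^ 2) * ((Fintype.card ι : ℝ) ^ 2 * (d.factorial : ℝ) ^ 2) ^ n =
      (rowRate d a * ((Fintype.card ι * n * d : ℕ) / Real.exp 1) ^ d) ^ n := by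
  have h1 : ∀ i, blockWeight n (a i) ^ 2 =
      ((n / Real.exp 1) ^ a i * (a i : ℝ) ^ a i / ((a i).factorial : ℝ) ^ 2) ^ n := by
    intro i
    rw [blockWeight, div_pow, Real.sq_sqrt (by positivity), ← mul_pow, div_pow, mul_comm n (a i),
      pow_mul, pow_right_comm _ n 2]
    push_cast
    ring
  have hk : (0 : ℝ) < Fintype.card ι := by exact_mod_cast Fintype.card_pos
  have hd' : (0 : ℝ) < d := by exact_mod_cast hd
  have hf : 0 < ∏ i, ((a i).factorial : ℝ) ^ 2 := prod_pos fun i _ => by positivity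
  rw [prod_congr rfl fun i _ => h1 i, prod_pow, ← mul_pow, prod_div_distrib, prod_mul_distrib,
    prod_pow_eq_pow_sum, hsum, rowRate]
  congr 1
  have h2 : ((Fintype.card ι * n * d : ℕ) / Real.exp 1 : ℝ) ^ d =
      (Fintype.card ι * d : ℝ) ^ d * (n / Real.exp 1) ^ d := by
    rw [← mul_pow]
    push_cast
    ring
  rw [h2]
  have h3 : (0 : ℝ) < (Fintype.card ι * d : ℝ) ^ d := by positivity
  generalize (Fintype.card ι * d : ℝ) ^ d = Y at *
  generalize ∏ i, ((a i).factorial : ℝ) ^ 2 = F at *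
  generalize (n / Real.exp 1 : ℝ) ^ d = Z
  field_simp

/-- A graph in the support is compatible with one of the at most `k ^ (k n)` partitions. -/
theorem ncard_support_le {k n d : ℕ} {a : Fin k → Fin k → ℕ} (hsym : ∀ i j, a i j = a j i)
    {b : ℝ} (hb : 1 ≤ b) (hab : ∀ i j, (n * a i j : ℕ) ≤ b) :
    ({G : SimpleGraph (Fin (k * n)) | (∀ v, (G.neighborSet v).ncard = d) ∧
        G ∈ {G | 0 < rsbmLaw k n a {G}}}.ncard : ℝ) ≤
      (k : ℝ) ^ (k * n) * ((Real.exp 1 * b) ^ Fintype.card (Sym2 (Fin k)) *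
        ∏ i, ∏ j, blockWeight n (a i j)) := by
  have hsub : {G : SimpleGraph (Fin (k * n)) | (∀ v, (G.neighborSet v).ncard = d) ∧
      G ∈ {G | 0 < rsbmLaw k n a {G}}} ⊆
        ⋃ p : Fin (k * n) → Fin k, {G | IsEquiPartition k n p ∧ Compat k n a p G} := by
    rintro G ⟨-, hG⟩
    simp only [Set.mem_ofPred_eq, rsbmLaw, rsbmP] at hG
    obtain ⟨⟨p, G'⟩, h1, h2, h3⟩ := Set.nonempty_of_ncard_ne_zero
      (fun h0 => hG.ne' (by rw [h0]; simp) : _ ≠ 0)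
    obtain rfl : G' = G := h3
    exact Set.mem_iUnion.2 ⟨p, h1, h2⟩
  have h1 := (Set.ncard_le_ncard hsub (Set.toFinite _)).trans
    (Set.ncard_iUnion_le_of_fintype _)
  have hw : ∀ α, 0 ≤ blockWeight n α := fun α => by unfold blockWeight; positivity
  calc _ ≤ ∑ p : Fin (k * n) → Fin k,
        ({G | IsEquiPartition k n p ∧ Compat k n a p G}.ncard : ℝ) := by exact_mod_cast h1
    _ ≤ ∑ _p : Fin (k * n) → Fin k, (Real.exp 1 * b) ^ Fintype.card (Sym2 (Fin k)) *
        ∏ i, ∏ j, blockWeight n (a i j) := by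
        refine sum_le_sum fun p _ => ?_
        by_cases hp : IsEquiPartition k n p
        · simpa only [hp, true_and] using ncard_compat_le hsym hp hb hab
        · simp only [hp, false_and, Set.ofPred_false, Set.ncard_empty, Nat.cast_zero]
          exact mul_nonneg (by positivity) (prod_nonneg fun i _ => prod_nonneg fun j _ => hw _)
    _ = _ := by simp

/-- The square of the mass of the support decays at the rate `∏ i, rowRate d (a i)`, up to a
polynomial factor. -/
theorem uniformRegularLaw_sq_le {k d : ℕ} (hk : 3 ≤ k) {a : Fin k → Fin k → ℕ}
    (hpos : ∀ i j, 0 < a i j) (hsym : ∀ i j, a i j = a j i) (hrow : ∀ i, ∑ j, a i j = d) :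
    ∃ (C : ℝ) (L : ℕ), ∀ᶠ n : ℕ in atTop,
      uniformRegularLaw (k * n) d {G | 0 < rsbmLaw k n a {G}} ^ 2 ≤
        C * ((n : ℝ) ^ L * (∏ i, rowRate d (a i)) ^ n) := by
  obtain ⟨δ, hδ⟩ : ∃ δ, d * (d + 1) = 2 * δ :=
    (Nat.even_mul_succ_self d).imp fun δ h => by rw [h, two_mul]
  have hle : ∀ i j, a i j ≤ d := fun i j => by
    rw [← hrow i]
    exact single_le_sum (f := a i) (fun _ _ => Nat.zero_le _) (mem_univ j)
  have : Nonempty (Fin k) := ⟨⟨0, by omega⟩⟩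
  have hd : 0 < d := (hpos ⟨0, by omega⟩ ⟨0, by omega⟩).trans_le (hle _ _)
  set T := Fintype.card (Sym2 (Fin k)) with hT
  refine ⟨(Real.exp 1 * (d + 1)) ^ (2 * T) * (2 ^ δ * δ.factorial : ℝ) ^ 2 * (k : ℝ) ^ (8 * δ),
    2 * T + 8 * δ, ?_⟩
  filter_upwards [eventually_ge_atTop (δ + 2 * (d + 1) * d + 1)] with n hn
  have hrate : 0 ≤ ∏ i, rowRate d (a i) :=
    prod_nonneg fun i _ => by unfold rowRate; positivity
  unfold uniformRegularLaw
  -- Without regular graphs the law is a quotient by zero, hence zero. Otherwise a regular graph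
  -- shows that `k * n * d` is even.
  by_cases hD : {G : SimpleGraph (Fin (k * n)) | ∀ v, (G.neighborSet v).ncard = d}.ncard = 0
  · rw [hD]
    simp only [Nat.cast_zero, div_zero, ne_eq, OfNat.ofNat_ne_zero, not_false_eq_true, zero_pow]
    positivity
  obtain ⟨G, hG⟩ := Set.nonempty_of_ncard_ne_zero hD
  obtain ⟨h, hh⟩ := even_of_regular hG
  have hnpos : 1 ≤ n := by omega
  have hlarge : δ + 2 * (d + 1) * d < h := by
    have : 3 * n * 1 ≤ k * n * d := Nat.mul_le_mul (Nat.mul_le_mul_right n hk) hd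
    omega
  have hden := sq_le_card_regular hh hδ hlarge
  have hn' : (1 : ℝ) ≤ n := by exact_mod_cast hnpos
  have hnum := ncard_support_le (k := k) (n := n) (d := d) hsym (b := (d + 1) * n)
    (by nlinarith [d.cast_nonneg (α := ℝ)])
    (fun i j => by
      push_cast
      have : (a i j : ℝ) ≤ d := by exact_mod_cast hle i j
      nlinarith)
  -- The exponential parts of numerator and denominator match row by row.
  have hrows : (∏ i, ∏ j, blockWeight n (a i j)) ^ 2 * ((k : ℝ) ^ (k * n)) ^ 2 *
      ((d.factorial : ℝ) ^ (k * n)) ^ 2 =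
        (∏ i, rowRate d (a i)) ^ n * ((k * n * d : ℕ) / Real.exp 1) ^ (k * n * d) := by
    have h1 : ∏ i, ((∏ j, blockWeight n (a i j) ^ 2) *
        ((k : ℝ) ^ 2 * (d.factorial : ℝ) ^ 2) ^ n) =
          ∏ i, (rowRate d (a i) * ((k * n * d : ℕ) / Real.exp 1) ^ d) ^ n :=
      prod_congr rfl fun i _ => by
        have := prod_blockWeight_sq (n := n) (hrow i) hd
        rwa [Fintype.card_fin] at this
    simp only [prod_mul_distrib, prod_pow, prod_const, card_univ, Fintype.card_fin] at h1
    have h2 : ∀ W : ℝ, W ^ (k * n * d) = ((W ^ k) ^ d) ^ n := fun W => by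
      rw [← pow_mul, ← pow_mul]
      ring
    rw [h2, ← mul_pow (∏ i, rowRate d (a i)), ← h1]
    ring
  set X := ∏ i, ∏ j, blockWeight n (a i j)
  set R := ∏ i, rowRate d (a i)
  have hZ : (0 : ℝ) < ((k * n * d : ℕ) / Real.exp 1) ^ (k * n * d) := by
    have : 0 < k * n * d := by positivity
    have : (0 : ℝ) < (k * n * d : ℕ) := by exact_mod_cast this
    positivity
  set Z : ℝ := ((k * n * d : ℕ) / Real.exp 1) ^ (k * n * d)
  have hD' : (0 : ℝ) <
      {G : SimpleGraph (Fin (k * n)) | ∀ v, (G.neighborSet v).ncard = d}.ncard := by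
    exact_mod_cast Nat.pos_of_ne_zero hD
  set D : ℝ :=
    ((Set.ncard {G : SimpleGraph (Fin (k * n)) | ∀ v, (G.neighborSet v).ncard = d} : ℕ) : ℝ)
  rw [div_pow, div_le_iff₀ (by positivity)]
  refine (pow_le_pow_left₀ (Nat.cast_nonneg _) hnum 2).trans ?_
  refine le_of_mul_le_mul_right ?_ hZ
  set P : ℝ := (Real.exp 1 * ((d + 1) * n)) ^ T with hP
  calc ((k : ℝ) ^ (k * n) * (P * X)) ^ 2 * Z
      ≤ ((k : ℝ) ^ (k * n) * (P * X)) ^ 2 * ((2 ^ δ * δ.factorial : ℝ) ^ 2 *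
          ((d.factorial : ℝ) ^ (k * n)) ^ 2 * ((k * n : ℕ) : ℝ) ^ (8 * δ) * D ^ 2) := by gcongr
    _ = P ^ 2 * (2 ^ δ * δ.factorial : ℝ) ^ 2 * ((k * n : ℕ) : ℝ) ^ (8 * δ) * D ^ 2 *
          (X ^ 2 * ((k : ℝ) ^ (k * n)) ^ 2 * ((d.factorial : ℝ) ^ (k * n)) ^ 2) := by ring
    _ = _ := by
      rw [hrows, hP, ← pow_mul, ← mul_assoc (Real.exp 1), mul_pow _ (n : ℝ)]
      push_cast
      rw [mul_pow (k : ℝ)]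
      ring

/-- There is a constant `C' > 0` such that for all sufficiently large `n`,
the uniform measure on `d`-regular graphs on `k n` vertices assigns to the support
`Sⁿ_A = {G | μⁿ_A {G} > 0}` of the RSBM mass at most
`C' · (k³/(2π)^{k-1})^{kn/2} · n^{(k²-3k+2)/4}`; in particular this mass tends to `0`. -/
theorem uniform_mass_of_support_le (k d : ℕ) (hk : 3 ≤ k)
    (a : Fin k → Fin k → ℕ)
    (hpos : ∀ i j, 0 < a i j)
    (hsym : ∀ i j, a i j = a j i)
    (hrow : ∀ i, ∑ j, a i j = d) :
    ∃ C' : ℝ, 0 < C' ∧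
      (∀ᶠ n : ℕ in atTop,
        uniformRegularLaw (k * n) d {G | 0 < rsbmLaw k n a {G}} ≤
          C' * ((k : ℝ) ^ 3 / (2 * Real.pi) ^ (k - 1)) ^ (((k * n : ℕ) : ℝ) / 2) *
            (n : ℝ) ^ (((k : ℝ) ^ 2 - 3 * k + 2) / 4)) ∧
      Tendsto (fun n : ℕ => uniformRegularLaw (k * n) d {G | 0 < rsbmLaw k n a {G}})
        atTop (nhds 0) := by
  obtain ⟨C, L, hCL⟩ := uniformRegularLaw_sq_le hk hpos hsym hrow
  have hk' : (3 : ℝ) ≤ k := by exact_mod_cast hk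
  have hpi := Real.pi_pos
  set β : ℝ := (k : ℝ) ^ 3 / (2 * Real.pi) ^ (k - 1) with hβ
  have hβ0 : 0 < β := by positivity
  set γ : ℝ := β ^ ((k : ℝ) / 2) with hγ
  have hγ0 : 0 < γ := Real.rpow_pos_of_pos hβ0 _
  have hγ1 : γ < 1 := Real.rpow_lt_one hβ0.le (base_lt_one hk) (by positivity)
  have hγn : ∀ n : ℕ, β ^ (((k * n : ℕ) : ℝ) / 2) = γ ^ n := fun n => by
    rw [hγ, ← Real.rpow_natCast, ← Real.rpow_mul hβ0.le]
    congr 1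
    push_cast
    ring
  have hγ2 : γ ^ 2 = β ^ k := by
    rw [hγ, ← Real.rpow_natCast, ← Real.rpow_mul hβ0.le, ← Real.rpow_natCast]
    congr 1
    push_cast
    ring
  set R := ∏ i, rowRate d (a i) with hR
  have hR0 : 0 ≤ R := prod_nonneg fun i _ => by unfold rowRate; positivity
  have hRlt : R < γ ^ 2 := by
    have hrate : ∀ i, rowRate d (a i) < β := fun i => by
      have := rowRate_lt (hpos i) (hrow i) (by rw [Fintype.card_fin]; omega)
      rwa [Fintype.card_fin] at this
    have hrate0 : ∀ i, 0 < rowRate d (a i) := fun i => by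
      have hd : 0 < d := by
        rw [← hrow i]
        exact sum_pos (fun j _ => hpos i j) ⟨i, mem_univ i⟩
      have : 0 < ∏ j, (a i j : ℝ) ^ a i j :=
        prod_pos fun j _ => pow_pos (by exact_mod_cast hpos i j) _
      unfold rowRate
      rw [Fintype.card_fin]
      have : (0 : ℝ) < d := by exact_mod_cast hd
      positivity
    rw [hγ2, hR]
    calc ∏ i, rowRate d (a i) < ∏ _i : Fin k, β :=
          prod_lt_prod_of_nonempty (fun i _ => hrate0 i) (fun i _ => hrate i)
            ⟨⟨0, by omega⟩, mem_univ _⟩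
      _ = β ^ k := by simp
  -- `γ ^ n` is the claimed exponential factor and `R ^ n` the proved one for the square.
  set q := R / γ ^ 2 with hq
  have hq0 : 0 ≤ q := by positivity
  have hq1 : q < 1 := (div_lt_one (by positivity)).2 hRlt
  have hpoly : ∀ᶠ n : ℕ in atTop, C * ((n : ℝ) ^ L * q ^ n) ≤ 1 := by
    have h1 := (tendsto_pow_const_mul_const_pow_of_abs_lt_one L
      (by rwa [abs_of_nonneg hq0] : |q| < 1)).const_mul C
    rw [mul_zero] at h1
    exact (h1.eventually_lt_const one_pos).mono fun _ h => h.le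
  have hnonneg : ∀ n, 0 ≤ uniformRegularLaw (k * n) d {G | 0 < rsbmLaw k n a {G}} := fun n => by
    unfold uniformRegularLaw
    positivity
  have hle : ∀ᶠ n : ℕ in atTop,
      uniformRegularLaw (k * n) d {G | 0 < rsbmLaw k n a {G}} ≤ γ ^ n := by
    filter_upwards [hCL, hpoly] with n h1 h2
    refine (sq_le_sq₀ (hnonneg n) (by positivity)).1 (h1.trans ?_)
    have h3 : R ^ n = q ^ n * (γ ^ n) ^ 2 := by
      rw [hq, div_pow, ← pow_mul, ← pow_mul, mul_comm n 2]
      field_simp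
    calc C * ((n : ℝ) ^ L * R ^ n) = C * ((n : ℝ) ^ L * q ^ n) * (γ ^ n) ^ 2 := by rw [h3]; ring
      _ ≤ 1 * (γ ^ n) ^ 2 := by gcongr
      _ = _ := one_mul _
  -- The strict gap in the rates absorbs every polynomial factor, so the constant is `1` and the
  -- power of `n`, whose exponent is nonnegative, is only needed to be at least `1`.
  refine ⟨1, one_pos, ?_, ?_⟩
  · filter_upwards [hle, eventually_ge_atTop 1] with n h1 hn
    rw [hγn, one_mul]
    refine h1.trans (le_mul_of_one_le_right (by positivity) ?_)
    exact Real.one_le_rpow (by exact_mod_cast hn) (by nlinarith)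
  · exact squeeze_zero' (Eventually.of_forall hnonneg) hle
      (tendsto_pow_atTop_nhds_zero_of_lt_one hγ0.le hγ1)
end
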